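/- arXiv:0706.3451 — 3 statements merged into one kernel-verified Lean document; each statement's English description precedes it below -/
import Mathlib

section
/- Let (A, 𝔪, k) be a commutative Noetherian local ring, let M be a finitely generated A-module having reducible complexity, and let t be a natural number. If for every finitely generated A-module N having reducible complexity with cx N = t one has Ext^i_A(M,N) = 0 for all i ≫ 0, then cx M < t. In particular, M has finite projective dimension if and only if Ext^i_A(M,N) = 0 for every N of reducible complexity with cx N = 1 and all i ≫ 0. -/
open CategoryTheory Opposite Filter IsLocalRing

universe u

namespace ComplexityTest

variable (A : Type u) [CommRing A] [IsLocalRing A]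

structure MinFreeRes (M : Type u) [AddCommGroup M] [Module A M] : Type u where
  b : ℕ → ℕ
  d : (n : ℕ) → ((Fin (b (n + 1)) → A) →ₗ[A] (Fin (b n) → A))
  aug : (Fin (b 0) → A) →ₗ[A] M
  aug_surjective : Function.Surjective aug
  exact_zero : Function.Exact (d 0) aug
  exact_succ : ∀ n, Function.Exact (d (n + 1)) (d n)
  minimal : ∀ n x i, d n x i ∈ maximalIdeal A

variable (M : Type u) [AddCommGroup M] [Module A M]

def HasComplexityLE (t : ℕ) : Prop :=
  ∃ (R : MinFreeRes A M) (a : ℝ), ∀ᶠ n : ℕ in atTop, (R.b n : ℝ) ≤ a * (n : ℝ) ^ ((t : ℤ) - 1)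

noncomputable def complexity : ℕ∞ :=
  sInf {c : ℕ∞ | ∃ t : ℕ, c = t ∧ HasComplexityLE A M t}

def HasProjDimLE (t : ℕ) : Prop :=
  ∃ R : MinFreeRes A M, ∀ i, t < i → R.b i = 0

noncomputable def projDim : ℕ∞ :=
  sInf {c : ℕ∞ | ∃ t : ℕ, c = t ∧ HasProjDimLE A M t}

def HasFiniteProjDim : Prop :=
  ∃ t : ℕ, HasProjDimLE A M t

def IsSyzygyOf (S : Type u) [AddCommGroup S] [Module A S] : ℕ → Prop
  | 0 => Nonempty (S ≃ₗ[A] M)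
  | 1 => ∃ R : MinFreeRes A M, Nonempty (S ≃ₗ[A] (LinearMap.ker R.aug))
  | (n + 2) => ∃ R : MinFreeRes A M, Nonempty (S ≃ₗ[A] (LinearMap.ker (R.d n)))

variable {A M} in
def IsSES {K S : Type u} [AddCommGroup K] [Module A K] [AddCommGroup S] [Module A S]
    (f : M →ₗ[A] K) (g : K →ₗ[A] S) : Prop :=
  Function.Injective f ∧ Function.Exact f g ∧ Function.Surjective g

noncomputable def extModule (n : ℕ) (N : Type u) [AddCommGroup N] [Module A N] :
    ModuleCat A :=
  ((_root_.Ext A (ModuleCat.{u} A) n).obj (op (ModuleCat.of A M))).obj (ModuleCat.of A N)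

def extVanish (n : ℕ) (N : Type u) [AddCommGroup N] [Module A N] : Prop :=
  Subsingleton (extModule A M n N)

/-- The `n`-th Tor module `Tor^A_n(M, N)`. -/
noncomputable def torModule (n : ℕ) (N : Type u) [AddCommGroup N] [Module A N] :
    ModuleCat A :=
  ((Tor (ModuleCat.{u} A) n).obj (ModuleCat.of A M)).obj (ModuleCat.of A N)

/-- The vanishing `Tor^A_n(M, N) = 0`. -/
def torVanish (n : ℕ) (N : Type u) [AddCommGroup N] [Module A N] : Prop :=
  Subsingleton (torModule A M n N)

noncomputable def depth : ℕ∞ :=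
  sInf {c : ℕ∞ | ∃ i : ℕ, c = i ∧ ¬ extVanish A (ResidueField A) i M}

variable {A}

/-- The category of modules of *free reducible complexity* over the local ring `A`.
It is defined inductively: every finitely generated module of finite projective
dimension has free reducible complexity, and a finitely generated module `M` of finite
positive complexity has free reducible complexity provided there is a short exact
sequence `0 → M → K → Ω^n_A(M) → 0` (necessarily induced by a cohomology element
`η ∈ Ext^{n+1}_A(M,M)`) where `K` is a finitely generated module of free reducible
complexity with `cx K = cx M - 1`. -/
inductive HasFreeRedCxCat : ModuleCat.{u} A → Prop
  | of_finite_projDim (M : ModuleCat.{u} A) (hfg : Module.Finite A M)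
      (h : HasFiniteProjDim A M) : HasFreeRedCxCat M
  | step (M K S : ModuleCat.{u} A) (n : ℕ)
      (hfg : Module.Finite A M) (hKfg : Module.Finite A K)
      (hpos : 0 < complexity A M) (hfin : complexity A M ≠ ⊤)
      (hsyz : IsSyzygyOf A M S n)
      (f : M →ₗ[A] K) (g : K →ₗ[A] S) (hses : IsSES f g)
      (hcx : complexity A K = complexity A M - 1)
      (hK : HasFreeRedCxCat K) : HasFreeRedCxCat M

/-- The category of modules of *reducible complexity* over the local ring `A`: as for
free reducible complexity, but where in addition the reductions are required to
preserve depth. -/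
inductive HasRedCxCat : ModuleCat.{u} A → Prop
  | of_finite_projDim (M : ModuleCat.{u} A) (hfg : Module.Finite A M)
      (h : HasFiniteProjDim A M) : HasRedCxCat M
  | step (M K S : ModuleCat.{u} A) (n : ℕ)
      (hfg : Module.Finite A M) (hKfg : Module.Finite A K)
      (hpos : 0 < complexity A M) (hfin : complexity A M ≠ ⊤)
      (hsyz : IsSyzygyOf A M S n)
      (f : M →ₗ[A] K) (g : K →ₗ[A] S) (hses : IsSES f g)
      (hcx : complexity A K = complexity A M - 1)
      (hdepth : depth A K = depth A M)
      (hK : HasRedCxCat K) : HasRedCxCat M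

variable (A)

/-- `M` has free reducible complexity. -/
def HasFreeRedCx (M : Type u) [AddCommGroup M] [Module A M] : Prop :=
  HasFreeRedCxCat (ModuleCat.of A M)

/-- `M` has reducible complexity. -/
def HasRedCx (M : Type u) [AddCommGroup M] [Module A M] : Prop :=
  HasRedCxCat (ModuleCat.of A M)

/-- A Noetherian local ring is Gorenstein if it has finite injective dimension over
itself; by Bass' characterization, this is equivalent to the vanishing of
`Ext^i_A(k, A)` for all sufficiently large `i`. -/
def IsGorenstein : Prop :=
  ∃ n : ℕ, ∀ i : ℕ, n < i → extVanish A (ResidueField A) i A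

end ComplexityTest

open ComplexityTest

namespace ComplexityTest

open CategoryTheory Abelian

section ExtCompare
variable {A : Type u} [CommRing A] [IsLocalRing A]

lemma extVanish_succ_iff (M N : Type u) [AddCommGroup M] [Module A M] [AddCommGroup N] [Module A N]
    (p : ℕ) : extVanish A M (p + 1) N ↔
      Subsingleton (Abelian.Ext (ModuleCat.of A M) (ModuleCat.of A N) (p + 1)) := by
  let P := projectiveResolution (ModuleCat.of A M)
  have h1 : extVanish A M (p + 1) N ↔
      ∀ f : P.complex.X (p + 1) ⟶ ModuleCat.of A N, P.complex.d (p + 2) (p + 1) ≫ f = 0 →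
        ∃ g : P.complex.X p ⟶ ModuleCat.of A N, P.complex.d (p + 1) p ≫ g = f := by
    unfold extVanish extModule
    rw [← ModuleCat.isZero_iff_subsingleton,
      Iso.isZero_iff (P.isoExt (R := A) (p + 1) (ModuleCat.of A N)),
      ← HomologicalComplex.exactAt_iff_isZero_homology,
      HomologicalComplex.exactAt_iff' _ p (p + 1) (p + 2) (by simp) (by simp),
      ShortComplex.moduleCat_exact_iff]
    rfl
  rw [h1]
  constructor
  · intro h
    refine subsingleton_of_forall_eq 0 fun x => ?_
    obtain ⟨f, hf, rfl⟩ := P.extMk_surjective x (p + 2) rfl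
    exact (P.extMk_eq_zero_iff f (p + 2) rfl hf p rfl).2 (h f hf)
  · intro h f hf
    exact (P.extMk_eq_zero_iff f (p + 2) rfl hf p rfl).1 (Subsingleton.elim _ _)

end ExtCompare

section Syz
variable {A : Type u} [CommRing A] [IsLocalRing A] {M : Type u} [AddCommGroup M] [Module A M]

/-- The free module in degree `n`. -/
abbrev MinFreeRes.F (R : MinFreeRes A M) (n : ℕ) : ModuleCat.{u} A :=
  ModuleCat.of A (Fin (R.b n) → A)

/-- The `n`-th syzygy. -/
def MinFreeRes.Z (R : MinFreeRes A M) : ℕ → ModuleCat.{u} A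
  | 0 => ModuleCat.of A M
  | 1 => ModuleCat.of A (LinearMap.ker R.aug)
  | (n + 2) => ModuleCat.of A (LinearMap.ker (R.d n))

lemma shortExact_of {X Y W : Type u} [AddCommGroup X] [Module A X] [AddCommGroup Y] [Module A Y]
    [AddCommGroup W] [Module A W] (f : X →ₗ[A] Y) (g : Y →ₗ[A] W)
    (hf : Function.Injective f) (hfg : Function.Exact f g) (hg : Function.Surjective g) :
    ∃ w, (ShortComplex.mk (ModuleCat.ofHom f) (ModuleCat.ofHom g) w).ShortExact := by
  refine ⟨?_, ?_⟩
  · ext x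
    exact hfg.apply_apply_eq_zero x
  · have : Mono (ModuleCat.ofHom f) := (ModuleCat.mono_iff_injective _).2 hf
    have : Epi (ModuleCat.ofHom g) := (ModuleCat.epi_iff_surjective _).2 hg
    refine ShortComplex.ShortExact.mk ?_
    rw [ShortComplex.ShortExact.moduleCat_exact_iff_function_exact]
    exact hfg

lemma MinFreeRes.exists_ses (R : MinFreeRes A M) (n : ℕ) :
    ∃ (f : R.Z (n + 1) ⟶ R.F n) (g : R.F n ⟶ R.Z n) (w : f ≫ g = 0),
      (ShortComplex.mk f g w).ShortExact ∧
        ∀ (x : R.Z (n + 1)) (i : Fin (R.b n)), (f.hom x : Fin (R.b n) → A) i ∈ maximalIdeal A := by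
  match n with
  | 0 =>
    obtain ⟨w, h⟩ := shortExact_of (LinearMap.ker R.aug).subtype R.aug
      (Submodule.subtype_injective _) (LinearMap.exact_subtype_ker_map R.aug) R.aug_surjective
    refine ⟨_, _, w, h, ?_⟩
    rintro ⟨x, hx⟩ i
    obtain ⟨y, rfl⟩ := (R.exact_zero x).1 hx
    exact R.minimal 0 y i
  | 1 =>
    obtain ⟨w, h⟩ := shortExact_of (LinearMap.ker (R.d 0)).subtype
      ((R.d 0).codRestrict (LinearMap.ker R.aug) (fun x => R.exact_zero.apply_apply_eq_zero x))
      (Submodule.subtype_injective _)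
      (by
        intro y
        exact Subtype.ext_iff.trans (LinearMap.exact_subtype_ker_map (R.d 0) y))
      (by
        rintro ⟨y, hy⟩
        obtain ⟨x, rfl⟩ := (R.exact_zero y).1 hy
        exact ⟨x, rfl⟩)
    refine ⟨_, _, w, h, ?_⟩
    rintro ⟨x, hx⟩ i
    obtain ⟨y, rfl⟩ := (R.exact_succ 0 x).1 hx
    exact R.minimal 1 y i
  | (n + 2) =>
    obtain ⟨w, h⟩ := shortExact_of (LinearMap.ker (R.d (n + 1))).subtype
      ((R.d (n + 1)).codRestrict (LinearMap.ker (R.d n))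
        (fun x => (R.exact_succ n).apply_apply_eq_zero x))
      (Submodule.subtype_injective _)
      (by
        intro y
        exact Subtype.ext_iff.trans (LinearMap.exact_subtype_ker_map (R.d (n + 1)) y))
      (by
        rintro ⟨y, hy⟩
        obtain ⟨x, rfl⟩ := (R.exact_succ n y).1 hy
        exact ⟨x, rfl⟩)
    refine ⟨_, _, w, h, ?_⟩
    rintro ⟨x, hx⟩ i
    obtain ⟨y, rfl⟩ := (R.exact_succ (n + 1) x).1 hx
    exact R.minimal (n + 2) y i

/-- The residue field as an object. -/
noncomputable abbrev kObj (A : Type u) [CommRing A] [IsLocalRing A] : ModuleCat.{u} A :=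
  ModuleCat.of A (ResidueField A)

lemma F_projective (R : MinFreeRes A M) (n : ℕ) : Projective (R.F n) :=
  (IsProjective.iff_projective _).1 inferInstance

lemma residue_kill {b : ℕ} (φ : (Fin b → A) →ₗ[A] ResidueField A) (v : Fin b → A)
    (hv : ∀ i, v i ∈ maximalIdeal A) : φ v = 0 := by
  rw [LinearMap.pi_apply_eq_sum_univ φ v]
  refine Finset.sum_eq_zero fun i _ => ?_
  rw [Algebra.smul_def]
  have : algebraMap A (ResidueField A) (v i) = 0 := (residue_eq_zero_iff _).2 (hv i)
  rw [this, zero_mul]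

lemma MinFreeRes.exists_shift (R : MinFreeRes A M) (n : ℕ) :
    ∃ θ : Abelian.Ext (ModuleCat.of A M) (R.Z n) n,
      (∀ (Y : ModuleCat.{u} A) (i m : ℕ) (h : n + (i + 1) = m)
        (x : Abelian.Ext (R.Z n) Y (i + 1)), θ.comp x h = 0 → x = 0) ∧
      (∀ (Y : ModuleCat.{u} A) (i m : ℕ) (h : n + i = m)
        (y : Abelian.Ext (ModuleCat.of A M) Y m),
        ∃ x : Abelian.Ext (R.Z n) Y i, θ.comp x h = y) ∧
      (∀ x : Abelian.Ext (R.Z n) (kObj A) 0, θ.comp x (add_zero n) = 0 → x = 0) := by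
  induction n with
  | zero =>
    refine ⟨Abelian.Ext.mk₀ (𝟙 _), ?_, ?_, ?_⟩
    · intro Y i m h x hx
      obtain rfl : i + 1 = m := by omega
      exact (Abelian.Ext.mk₀_id_comp x).symm.trans hx
    · intro Y i m h y
      obtain rfl : i = m := by omega
      exact ⟨y, Abelian.Ext.mk₀_id_comp y⟩
    · intro x hx
      exact (Abelian.Ext.mk₀_id_comp x).symm.trans hx
  | succ n ih =>
    obtain ⟨θ, h1, h2, h3⟩ := ih
    obtain ⟨f, g, w, hS, hmin⟩ := R.exists_ses n
    have hproj : Projective (R.F n) := F_projective R n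
    refine ⟨θ.comp hS.extClass rfl, ?_, ?_, ?_⟩
    · intro Y i m h x hx
      rw [Abelian.Ext.comp_assoc _ _ _ rfl (show 1 + (i + 1) = (i + 1) + 1 by omega)
        (by omega)] at hx
      have hx' := h1 Y (i + 1) m (by omega) _ hx
      obtain ⟨y, rfl⟩ := Abelian.Ext.contravariant_sequence_exact₁ hS Y x _ hx'
      have hy : y = 0 := Abelian.Ext.eq_zero_of_projective (P := R.F n) y
      rw [hy, Abelian.Ext.comp_zero]
    · intro Y i m h y
      obtain ⟨x, rfl⟩ := h2 Y (i + 1) m (by omega) y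
      obtain ⟨z, rfl⟩ := Abelian.Ext.contravariant_sequence_exact₃ hS Y x
        (Abelian.Ext.eq_zero_of_projective (P := R.F n) _) (show 1 + i = i + 1 by omega)
      exact ⟨z, Abelian.Ext.comp_assoc _ _ _ rfl _ (by omega)⟩
    · intro x hx
      rw [Abelian.Ext.comp_assoc _ _ _ rfl (show 1 + 0 = 0 + 1 by omega)
        (by omega)] at hx
      have hx' := h1 _ 0 (n + 1) (by omega) _ hx
      obtain ⟨y, rfl⟩ := Abelian.Ext.contravariant_sequence_exact₁ hS _ x _ hx'
      obtain ⟨φ, rfl⟩ := Abelian.Ext.mk₀_bijective _ _ |>.2 y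
      rw [Abelian.Ext.mk₀_comp_mk₀]
      have : f ≫ φ = 0 := by
        ext v
        exact residue_kill φ.hom _ (hmin v)
      change Abelian.Ext.mk₀ (f ≫ φ) = 0
      rw [this, Abelian.Ext.mk₀_zero]

lemma length_hom_F (R : MinFreeRes A M) (n : ℕ) :
    Module.length A (R.F n ⟶ kObj A) = R.b n := by
  have e : (R.F n ⟶ kObj A) ≃ₗ[A] ((Fin (R.b n) → A) →ₗ[A] ResidueField A) :=
    ModuleCat.homLinearEquiv
  have e2 : ((Fin (R.b n) → A) →ₗ[A] ResidueField A) ≃ₗ[A] (Fin (R.b n) → ResidueField A) :=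
    ((Pi.basisFun A (Fin (R.b n))).constr A).symm
  have : IsSimpleModule A (ResidueField A) := by
    have : IsSimpleModule A (A ⧸ maximalIdeal A) :=
      isSimpleModule_iff_isCoatom.2 (maximalIdeal.isMaximal A).out
    exact this
  rw [(e.trans e2).length_eq, Module.length_pi]
  simp [Module.length_eq_one]

lemma length_ext_eq (R : MinFreeRes A M) (n : ℕ) :
    Module.length A (Abelian.Ext (ModuleCat.of A M) (kObj A) n) = R.b n := by
  obtain ⟨θ, -, h2, h3⟩ := R.exists_shift n
  obtain ⟨f, g, w, hS, hmin⟩ := R.exists_ses n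
  have hbij : Function.Bijective
      (Abelian.Ext.precompOfLinear θ A (kObj A) (add_zero n)) := by
    refine ⟨?_, fun y => h2 _ 0 n (add_zero n) y⟩
    rw [injective_iff_map_eq_zero]
    exact h3
  rw [← (LinearEquiv.ofBijective _ hbij).length_eq,
    (Abelian.Ext.linearEquiv₀ (R := A)).length_eq, ← length_hom_F R n]
  have hb2 : Function.Bijective (Linear.leftComp A (kObj A) g) := by
    constructor
    · have : Epi g := hS.epi_g
      intro a b hab
      exact (cancel_epi g).1 hab
    · intro φ
      have h0 : f ≫ φ = 0 := by
        ext v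
        exact residue_kill φ.hom _ (hmin v)
      have : Epi (ShortComplex.mk f g w).g := hS.epi_g
      exact ⟨hS.exact.desc φ h0, hS.exact.g_desc φ h0⟩
  exact (LinearEquiv.ofBijective _ hb2).length_eq

lemma exists_iso_of_isSyzygyOf (R₀ : MinFreeRes A M) {S : ModuleCat.{u} A} {n : ℕ}
    (h : IsSyzygyOf A M S n) : ∃ R : MinFreeRes A M, Nonempty (S ≅ R.Z n) := by
  match n, h with
  | 0, h => exact ⟨R₀, h.map fun e => LinearEquiv.toModuleIso e⟩
  | 1, ⟨R, h⟩ => exact ⟨R, h.map fun e => LinearEquiv.toModuleIso e⟩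
  | (n + 2), ⟨R, h⟩ => exact ⟨R, h.map fun e => LinearEquiv.toModuleIso e⟩

lemma exists_syz_class (R₀ : MinFreeRes A M) {S : ModuleCat.{u} A} {n : ℕ}
    (h : IsSyzygyOf A M S n) : ∃ θ : Abelian.Ext (ModuleCat.of A M) S n,
      ∀ (Y : ModuleCat.{u} A) (i m : ℕ) (h : n + (i + 1) = m)
        (x : Abelian.Ext S Y (i + 1)), θ.comp x h = 0 → x = 0 := by
  obtain ⟨R, ⟨e⟩⟩ := exists_iso_of_isSyzygyOf R₀ h
  obtain ⟨θ, h1, -, -⟩ := R.exists_shift n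
  refine ⟨θ.comp (Abelian.Ext.mk₀ e.inv) (add_zero n), ?_⟩
  intro Y i m h x hx
  rw [Abelian.Ext.comp_assoc_of_second_deg_zero] at hx
  have := h1 _ _ _ _ _ hx
  have h4 : (Abelian.Ext.mk₀ e.hom).comp ((Abelian.Ext.mk₀ e.inv).comp x (zero_add _))
    (zero_add _) = 0 := by rw [this, Abelian.Ext.comp_zero]
  simpa using h4

lemma length_range_le {U V W Q : Type*} [AddCommGroup U] [Module A U] [AddCommGroup V] [Module A V]
    [AddCommGroup W] [Module A W] [AddCommGroup Q] [Module A Q]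
    (f : U →ₗ[A] V) (g : V →ₗ[A] W) (h : Q →ₗ[A] V) (hg : LinearMap.ker g ≤ LinearMap.range h) :
    Module.length A (LinearMap.range f) ≤
      Module.length A Q + Module.length A (LinearMap.range (g ∘ₗ f)) := by
  let g' : LinearMap.range f →ₗ[A] W := g ∘ₗ (LinearMap.range f).subtype
  have hr : LinearMap.range g' = LinearMap.range (g ∘ₗ f) := by
    rw [LinearMap.range_comp, LinearMap.range_comp, Submodule.range_subtype]
  rw [← hr]
  rw [Module.length_eq_add_of_exact (LinearMap.ker g').subtype g'.rangeRestrict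
    (Submodule.subtype_injective _) g'.surjective_rangeRestrict (by
      intro y
      rw [← LinearMap.exact_subtype_ker_map g' y]
      simp [Subtype.ext_iff])]
  gcongr
  calc Module.length A (LinearMap.ker g') ≤ Module.length A (LinearMap.range h) := by
        refine Module.length_le_of_injective
          (((LinearMap.range f).subtype ∘ₗ (LinearMap.ker g').subtype).codRestrict
            (LinearMap.range h) ?_) ?_
        · rintro ⟨⟨x, hx⟩, hx'⟩
          exact hg hx'
        · rintro ⟨⟨x, hx⟩, hx'⟩ ⟨⟨y, hy⟩, hy'⟩ hxy
          simpa [Subtype.ext_iff] using hxy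
    _ ≤ _ := Module.length_le_of_surjective h.rangeRestrict h.surjective_rangeRestrict

lemma betti_bound {M K S : ModuleCat.{u} A} {n : ℕ} (f : M ⟶ K) (g : K ⟶ S) (w : f ≫ g = 0)
    (hS : (ShortComplex.mk f g w).ShortExact) (θ : Abelian.Ext M S n)
    (hθ : ∀ (Y : ModuleCat.{u} A) (i m : ℕ) (h : n + (i + 1) = m)
        (x : Abelian.Ext S Y (i + 1)), θ.comp x h = 0 → x = 0)
    (j : ℕ) : ∃ η : Abelian.Ext M M (j * (n + 1)), ∀ (Y : ModuleCat.{u} A) (i : ℕ),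
      Module.length A (Abelian.Ext M Y i) ≤
        (∑ l ∈ Finset.range j, Module.length A (Abelian.Ext K Y (l * (n + 1) + i))) +
        Module.length A (LinearMap.range (Abelian.Ext.precompOfLinear η A Y
          (rfl : j * (n + 1) + i = j * (n + 1) + i))) := by
  induction j with
  | zero =>
    refine ⟨(zero_mul (n + 1)).symm ▸ Abelian.Ext.mk₀ (𝟙 M), ?_⟩
    intro Y i
    rw [Finset.sum_range_zero, zero_add]
    refine Module.length_le_of_injective (LinearMap.rangeRestrict _) ?_
    rw [LinearMap.injective_rangeRestrict_iff, injective_iff_map_eq_zero]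
    intro x hx
    have key : ∀ (z : ℕ) (hz : 0 = z) (m : ℕ) (hm : z + i = m),
        (hz ▸ Abelian.Ext.mk₀ (𝟙 M) : Abelian.Ext M M z).comp x hm = 0 → x = 0 := by
      rintro z rfl m hm h
      obtain rfl : i = m := by omega
      simpa using h
    exact key _ (zero_mul (n + 1)).symm _ rfl hx
  | succ j ih =>
    obtain ⟨η, hη⟩ := ih
    let η₁ : Abelian.Ext M M (n + 1) := θ.comp hS.extClass rfl
    refine ⟨η₁.comp η (by ring), fun Y i => (hη Y i).trans ?_⟩
    rw [Finset.sum_range_succ, add_assoc]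
    gcongr
    refine (length_range_le _
      (Abelian.Ext.precompOfLinear η₁ A Y
        (show (n + 1) + (j * (n + 1) + i) = (j + 1) * (n + 1) + i by ring))
      (Abelian.Ext.precompOfLinear (Abelian.Ext.mk₀ f) A Y (zero_add _)) ?_).trans ?_
    · intro x hx
      have hx1 : η₁.comp x (show (n + 1) + (j * (n + 1) + i) = (j + 1) * (n + 1) + i by ring)
        = 0 := hx
      rw [Abelian.Ext.comp_assoc _ _ _ rfl (add_comm 1 _) (by ring)] at hx1
      exact Abelian.Ext.contravariant_sequence_exact₁ hS Y x _ (hθ _ _ _ _ _ hx1)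
    · gcongr
      apply le_of_eq
      have : (Abelian.Ext.precompOfLinear η₁ A Y
          (show (n + 1) + (j * (n + 1) + i) = (j + 1) * (n + 1) + i by ring)) ∘ₗ
          (Abelian.Ext.precompOfLinear η A Y rfl) =
          Abelian.Ext.precompOfLinear (η₁.comp η
            (show (n + 1) + j * (n + 1) = (j + 1) * (n + 1) by ring)) A Y rfl := by
        refine LinearMap.ext fun x => ?_
        exact (Abelian.Ext.comp_assoc η₁ η x _ rfl (by ring)).symm
      rw [this]

end Syz

section Final
variable {A : Type u} [CommRing A] [IsLocalRing A]

lemma complexity_le {M : Type u} [AddCommGroup M] [Module A M] {t : ℕ}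
    (h : HasComplexityLE A M t) : complexity A M ≤ t :=
  sInf_le ⟨t, rfl, h⟩

lemma hasComplexityLE_of_eq {M : Type u} [AddCommGroup M] [Module A M] {t : ℕ}
    (h : complexity A M = t) : HasComplexityLE A M t := by
  have hne : {c : ℕ∞ | ∃ t : ℕ, c = t ∧ HasComplexityLE A M t}.Nonempty := by
    rw [Set.nonempty_iff_ne_empty]
    intro h0
    unfold complexity at h
    rw [h0, sInf_empty] at h
    exact ENat.top_ne_coe t h
  obtain ⟨s, hs, hs'⟩ := csInf_mem hne
  have : (s : ℕ∞) = t := hs.symm.trans h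
  have : s = t := by exact_mod_cast this
  exact this ▸ hs'

lemma complexity_zero_of_finite {M : Type u} [AddCommGroup M] [Module A M]
    (h : HasFiniteProjDim A M) : complexity A M = 0 := by
  obtain ⟨t, R, hR⟩ := h
  refine le_antisymm (complexity_le (t := 0) ⟨R, 0, ?_⟩) bot_le
  filter_upwards [eventually_gt_atTop t] with n hn
  simp [hR n hn]

lemma finite_of_complexity_zero {M : Type u} [AddCommGroup M] [Module A M]
    (h : complexity A M = 0) : HasFiniteProjDim A M := by
  obtain ⟨R, a, hR⟩ := hasComplexityLE_of_eq (t := 0) (by simpa using h)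
  obtain ⟨n0, hn0⟩ := eventually_atTop.1 hR
  obtain ⟨n1, hn1⟩ := exists_nat_gt a
  refine ⟨max (n0 + 1) n1, R, fun i hi => ?_⟩
  have hi0 : n0 ≤ i := by omega
  have hi1 : n1 ≤ i := by omega
  have hpos : (0 : ℝ) < i := by
    have : 0 < i := by omega
    exact_mod_cast this
  have hb := hn0 i hi0
  have e : (((0 : ℕ) : ℤ) - 1) = -1 := by norm_num
  rw [e, zpow_neg_one, ← div_eq_mul_inv] at hb
  have h2 : a / i < 1 := by
    rw [div_lt_one hpos]
    have : (n1 : ℝ) ≤ i := by exact_mod_cast hi1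
    linarith
  have h3 : (R.b i : ℝ) < 1 := lt_of_le_of_lt hb h2
  have : R.b i < 1 := by exact_mod_cast h3
  omega

lemma pow_compare (t i m : ℕ) (hi : 0 < i) (h1 : i ≤ m) (h2 : m ≤ 2 * i) :
    (m : ℝ) ^ ((t : ℤ) - 1) ≤ 2 ^ t * (i : ℝ) ^ ((t : ℤ) - 1) := by
  have hi' : (0 : ℝ) < i := by exact_mod_cast hi
  have h1' : (i : ℝ) ≤ m := by exact_mod_cast h1
  have h2' : (m : ℝ) ≤ 2 * i := by exact_mod_cast h2
  cases t with
  | zero =>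
    have e : (((0 : ℕ) : ℤ) - 1) = -1 := by norm_num
    rw [e, zpow_neg_one, zpow_neg_one, pow_zero, one_mul]
    exact inv_anti₀ hi' h1'
  | succ s =>
    have e : (((s + 1 : ℕ) : ℤ) - 1) = (s : ℤ) := by push_cast; ring
    rw [e, zpow_natCast, zpow_natCast]
    calc (m : ℝ) ^ s ≤ (2 * i) ^ s := by gcongr
      _ = 2 ^ s * (i : ℝ) ^ s := by rw [mul_pow]
      _ ≤ 2 ^ (s + 1) * (i : ℝ) ^ s := by
        gcongr
        · norm_num
        · omega

lemma growth {t j c : ℕ} {b b' : ℕ → ℕ} {a : ℝ}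
    (h : ∀ᶠ n : ℕ in atTop, (b n : ℝ) ≤ a * (n : ℝ) ^ ((t : ℤ) - 1))
    (hb : ∀ i, b' i ≤ ∑ l ∈ Finset.range j, b (l * c + i)) :
    ∃ a' : ℝ, ∀ᶠ n : ℕ in atTop, (b' n : ℝ) ≤ a' * (n : ℝ) ^ ((t : ℤ) - 1) := by
  refine ⟨j * (|a| * 2 ^ t), ?_⟩
  obtain ⟨n0, hn0⟩ := eventually_atTop.1 h
  filter_upwards [eventually_ge_atTop (n0 + j * c + 1)] with i hi
  have h1 : (b' i : ℝ) ≤ ∑ l ∈ Finset.range j, (b (l * c + i) : ℝ) := by exact_mod_cast hb i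
  refine h1.trans ?_
  have h2 : ∀ l ∈ Finset.range j, (b (l * c + i) : ℝ) ≤
      (|a| * 2 ^ t) * (i : ℝ) ^ ((t : ℤ) - 1) := by
    intro l hl
    have hlj : l * c ≤ j * c := Nat.mul_le_mul_right c (Finset.mem_range.1 hl).le
    have hge := hn0 (l * c + i) (by omega)
    have hcmp := pow_compare t i (l * c + i) (by omega) (by omega) (by omega)
    calc (b (l * c + i) : ℝ) ≤ a * ((l * c + i : ℕ) : ℝ) ^ ((t : ℤ) - 1) := hge
      _ ≤ |a| * ((l * c + i : ℕ) : ℝ) ^ ((t : ℤ) - 1) := by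
        gcongr
        exact le_abs_self a
      _ ≤ |a| * (2 ^ t * (i : ℝ) ^ ((t : ℤ) - 1)) := by gcongr
      _ = _ := by ring
  refine (Finset.sum_le_sum h2).trans (le_of_eq ?_)
  rw [Finset.sum_const, Finset.card_range, nsmul_eq_mul]
  ring

lemma eventually_extVanish_iff (M N : Type u) [AddCommGroup M] [Module A M]
    [AddCommGroup N] [Module A N] :
    (∀ᶠ i in atTop, extVanish A M i N) ↔
      ∃ i₀ : ℕ, ∀ i, i₀ ≤ i →
        Subsingleton (Abelian.Ext (ModuleCat.of A M) (ModuleCat.of A N) i) := by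
  rw [eventually_atTop]
  constructor
  · rintro ⟨i₀, h⟩
    refine ⟨i₀ + 1, fun i hi => ?_⟩
    obtain ⟨p, rfl⟩ : ∃ p, i = p + 1 := ⟨i - 1, by omega⟩
    exact (extVanish_succ_iff M N p).1 (h _ (by omega))
  · rintro ⟨i₀, h⟩
    refine ⟨i₀ + 1, fun i hi => ?_⟩
    obtain ⟨p, rfl⟩ : ∃ p, i = p + 1 := ⟨i - 1, by omega⟩
    exact (extVanish_succ_iff M N p).2 (h _ (by omega))

lemma extVanish_of_finite {M : Type u} [AddCommGroup M] [Module A M] (h : HasFiniteProjDim A M)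
    (N : Type u) [AddCommGroup N] [Module A N] : ∀ᶠ i in atTop, extVanish A M i N := by
  rw [eventually_extVanish_iff]
  obtain ⟨t, R, hR⟩ := h
  refine ⟨t + 1, fun i hi => ?_⟩
  obtain ⟨θ, -, h2, -⟩ := R.exists_shift i
  obtain ⟨f, g, w, hS, -⟩ := R.exists_ses i
  refine subsingleton_of_forall_eq 0 fun y => ?_
  obtain ⟨x, rfl⟩ := h2 _ 0 i (add_zero i) y
  have hx : x = 0 := by
    obtain ⟨φ, rfl⟩ := (Abelian.Ext.mk₀_bijective _ _).2 x
    have : φ = 0 := by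
      have : Epi g := hS.epi_g
      rw [← cancel_epi g]
      have hsub : IsEmpty (Fin (R.b i)) := by
        rw [hR i (by omega)]
        infer_instance
      ext v
      exact hsub.elim v
    rw [this, Abelian.Ext.mk₀_zero]
  rw [hx, Abelian.Ext.comp_zero]

lemma main_ind (M : ModuleCat.{u} A) (hM : HasRedCxCat M) (t : ℕ) (ht : 0 < t)
    (h : ∀ (N : Type u) [AddCommGroup N] [Module A N] [Module.Finite A N],
        HasRedCx A N → complexity A N = t → ∀ᶠ i in atTop, extVanish A M i N) :
    complexity A M < (t : ℕ∞) := by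
  induction hM with
  | of_finite_projDim M hfg hpd =>
    rw [complexity_zero_of_finite hpd]
    exact_mod_cast ht
  | step M K S n hfg hKfg hpos hfin hsyz f g hses hcx hdepth hK ih =>
    have hMrc : HasRedCxCat M :=
      HasRedCxCat.step M K S n hfg hKfg hpos hfin hsyz f g hses hcx hdepth hK
    obtain ⟨s, hs⟩ := ENat.ne_top_iff_exists.1 hfin
    obtain ⟨R, -, -⟩ := hasComplexityLE_of_eq hs.symm
    obtain ⟨w, hS⟩ := shortExact_of f g hses.1 hses.2.1 hses.2.2
    obtain ⟨θ, hθ⟩ := exists_syz_class R hsyz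
    have hKlt : complexity A K < t := by
      refine ih fun N _ _ _ hN hNt => ?_
      have hMN := h N hN hNt
      rw [eventually_extVanish_iff] at hMN ⊢
      obtain ⟨i₀, hi₀⟩ := hMN
      refine ⟨i₀ + 1, fun i hi => ?_⟩
      obtain ⟨p, rfl⟩ : ∃ p, i = p + 1 := ⟨i - 1, by omega⟩
      have s1 := hi₀ (p + 1) (by omega)
      have s2 := hi₀ (n + (p + 1)) (by omega)
      refine subsingleton_of_forall_eq 0 fun x => ?_
      obtain ⟨y, rfl⟩ := Abelian.Ext.contravariant_sequence_exact₂ hS _ x (s1.elim _ _)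
      have hy : y = 0 := hθ _ p _ rfl y (s2.elim _ _)
      rw [hy, Abelian.Ext.comp_zero]
    rw [hcx] at hKlt
    rw [← hs] at hpos hKlt hcx ⊢
    have hs0 : 0 < s := by exact_mod_cast hpos
    have hst : s - 1 < t := by exact_mod_cast hKlt
    have hcxK : complexity A K = (s - 1 : ℕ) := by rw [hcx]; norm_cast
    rcases Nat.lt_or_ge s t with hlt | hge
    · exact_mod_cast hlt
    exfalso
    obtain rfl : s = t := by omega
    have hMM := h M hMrc hs.symm
    rw [eventually_extVanish_iff] at hMM
    obtain ⟨i₀, hi₀⟩ := hMM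
    obtain ⟨RK, a, hRK⟩ := hasComplexityLE_of_eq hcxK
    obtain ⟨η, hη⟩ := betti_bound _ _ w hS θ hθ i₀
    have hη0 : η = 0 := (hi₀ (i₀ * (n + 1)) (Nat.le_mul_of_pos_right _ (by omega))).elim _ _
    have hb : ∀ i, R.b i ≤ ∑ l ∈ Finset.range i₀, RK.b (l * (n + 1) + i) := by
      intro i
      have h1 := hη (kObj A) i
      have h0 : Module.length A (LinearMap.range (Abelian.Ext.precompOfLinear η A (kObj A)
          (rfl : i₀ * (n + 1) + i = i₀ * (n + 1) + i))) = 0 := by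
        rw [hη0, Module.length_eq_zero_iff, Submodule.subsingleton_iff_eq_bot,
          LinearMap.range_eq_bot]
        exact map_zero _
      rw [h0, add_zero] at h1
      have e1 := length_ext_eq R i
      have e2 := fun l => length_ext_eq RK l
      have h2 : (R.b i : ℕ∞) ≤ ∑ l ∈ Finset.range i₀, (RK.b (l * (n + 1) + i) : ℕ∞) := by
        rw [← e1]
        simp_rw [← e2]
        exact h1
      exact_mod_cast h2
    obtain ⟨a', ha'⟩ := growth hRK hb
    have hle : complexity A M ≤ (s - 1 : ℕ) := complexity_le ⟨R, a', ha'⟩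
    rw [← hs] at hle
    have : s ≤ s - 1 := by exact_mod_cast hle
    omega

end Final

end ComplexityTest

/-- **Theorem 3.2 / Corollary 3.3 for reducible complexity**: let `M` be a module of
reducible complexity over the local ring `A` and `t` a (positive) natural number. If
`Ext^i_A(M,N) = 0` for `i ≫ 0` for every module `N` of reducible complexity with
`cx N = t`, then `cx M < t`. In particular, `M` has finite projective dimension if and
only if `Ext^i_A(M,N) = 0` for `i ≫ 0` for every `N` of reducible complexity with
`cx N = 1`. -/
theorem complexity_lt_of_extVanish_against_rc
    (A : Type u) [CommRing A] [IsLocalRing A] [IsNoetherianRing A]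
    (M : Type u) [AddCommGroup M] [Module A M] [Module.Finite A M]
    (hM : HasRedCx A M) :
    (∀ t : ℕ, 0 < t →
      (∀ (N : Type u) [AddCommGroup N] [Module A N] [Module.Finite A N],
        HasRedCx A N → complexity A N = t →
          ∀ᶠ i in Filter.atTop, extVanish A M i N) →
      complexity A M < (t : ℕ∞)) ∧
    (HasFiniteProjDim A M ↔
      ∀ (N : Type u) [AddCommGroup N] [Module A N] [Module.Finite A N],
        HasRedCx A N → complexity A N = 1 →
          ∀ᶠ i in Filter.atTop, extVanish A M i N) := by
  have h1 := fun (t : ℕ) (ht : 0 < t) h => main_ind (ModuleCat.of A M) hM t ht h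
  refine ⟨h1, fun h N _ _ _ _ _ => extVanish_of_finite h N, fun h => ?_⟩
  have h2 := h1 1 one_pos (fun N _ _ _ hN hc => h N hN (by simpa using hc))
  refine finite_of_complexity_zero ?_
  exact ENat.lt_one_iff_eq_zero.1 (by simpa using h2)
end

section
/- Let (A, 𝔪, k) be a Gorenstein commutative Noetherian local ring, let M be a finitely generated A-module having reducible complexity, and let N be any finitely generated A-module. If Ext^i_A(N,M) = 0 for all i ≫ 0, then Ext^i_A(M,N) = 0 for all i ≫ 0. In particular, symmetry in the vanishing of cohomology holds for modules having reducible complexity. -/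
open CategoryTheory Opposite Filter IsLocalRing

universe u

open ComplexityTest

section Helpers

open CategoryTheory Abelian

/-- vanishing of `Abelian.Ext`. -/
def EV (A : Type u) [CommRing A] (M : Type u) [AddCommGroup M] [Module A M] (n : ℕ)
    (Y : Type u) [AddCommGroup Y] [Module A Y] : Prop :=
  Subsingleton (Abelian.Ext.{u} (ModuleCat.of A M) (ModuleCat.of A Y) n)

theorem ext_bridge_aux (A : Type u) [CommRing A] (X Y : ModuleCat.{u} A) (n : ℕ) :
    Subsingleton (((_root_.Ext A (ModuleCat.{u} A) (n + 1)).obj (op X)).obj Y) ↔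
      Subsingleton (Abelian.Ext.{u} X Y (n + 1)) := by
  let P := projectiveResolution X
  have h1 : Subsingleton (((_root_.Ext A (ModuleCat.{u} A) (n + 1)).obj (op X)).obj Y) ↔
      ∀ f : P.complex.X (n + 1) ⟶ Y, P.complex.d (n + 2) (n + 1) ≫ f = 0 →
        ∃ g : P.complex.X n ⟶ Y, P.complex.d (n + 1) n ≫ g = f := by
    rw [← ModuleCat.isZero_iff_subsingleton, (P.isoExt (R := A) (n + 1) Y).isZero_iff,
      ← HomologicalComplex.exactAt_iff_isZero_homology,
      HomologicalComplex.exactAt_iff' _ n (n + 1) (n + 2) (by simp) (by simp),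
      ShortComplex.moduleCat_exact_iff]
    constructor
    · intro h f hf
      exact h f hf
    · intro h f hf
      exact h f hf
  have h2 : Subsingleton (Abelian.Ext.{u} X Y (n + 1)) ↔
      ∀ f : P.complex.X (n + 1) ⟶ Y, P.complex.d (n + 2) (n + 1) ≫ f = 0 →
        ∃ g : P.complex.X n ⟶ Y, P.complex.d (n + 1) n ≫ g = f := by
    constructor
    · intro h f hf
      exact (P.extMk_eq_zero_iff f (n + 2) rfl hf n rfl).1 (Subsingleton.elim _ _)
    · intro h
      refine subsingleton_of_forall_eq 0 fun e => ?_
      obtain ⟨f, hf, rfl⟩ := P.extMk_surjective e (n + 2) rfl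
      exact (P.extMk_eq_zero_iff f (n + 2) rfl hf n rfl).2 (h f hf)
  rw [h1, h2]

section basic
variable {A : Type u} [CommRing A]
variable {M₁ M₂ M₃ Y : Type u} [AddCommGroup M₁] [Module A M₁] [AddCommGroup M₂] [Module A M₂]
  [AddCommGroup M₃] [Module A M₃] [AddCommGroup Y] [Module A Y]

theorem ev_bridge [IsLocalRing A] (n : ℕ) (hn : 1 ≤ n) :
    extVanish A M₁ n Y ↔ EV A M₁ n Y := by
  obtain ⟨n, rfl⟩ : ∃ m, n = m + 1 := ⟨n - 1, by omega⟩
  exact ext_bridge_aux A _ _ n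

/-- short complex of a SES -/
abbrev sc (f : M₁ →ₗ[A] M₂) (g : M₂ →ₗ[A] M₃) (h : IsSES f g) :
    ShortComplex (ModuleCat.{u} A) :=
  ShortComplex.mk (ModuleCat.ofHom f) (ModuleCat.ofHom g) (by
    ext x; exact h.2.1.apply_apply_eq_zero x)

theorem sc_exact {f : M₁ →ₗ[A] M₂} {g : M₂ →ₗ[A] M₃} (h : IsSES f g) :
    (sc f g h).ShortExact where
  exact := (ShortComplex.moduleCat_exact_iff _).2 fun x hx => (h.2.1 x).1 hx
  mono_f := (ModuleCat.mono_iff_injective _).2 h.1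
  epi_g := (ModuleCat.epi_iff_surjective _).2 h.2.2

variable {f : M₁ →ₗ[A] M₂} {g : M₂ →ₗ[A] M₃}

theorem ev_c2 (h : IsSES f g) {n : ℕ} (h1 : EV A M₁ n Y) (h3 : EV A M₃ n Y) : EV A M₂ n Y := by
  refine subsingleton_of_forall_eq 0 fun e => ?_
  obtain ⟨x, rfl⟩ := Ext.contravariant_sequence_exact₂ (sc_exact h) _ e (h1.elim _ _)
  rw [h3.elim x 0]; simp

theorem ev_c1 (h : IsSES f g) {n : ℕ} (h2 : EV A M₂ n Y) (h3 : EV A M₃ (n + 1) Y) :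
    EV A M₁ n Y := by
  refine subsingleton_of_forall_eq 0 fun e => ?_
  obtain ⟨x, rfl⟩ := Ext.contravariant_sequence_exact₁ (sc_exact h) _ e (add_comm 1 n)
    (h3.elim _ _)
  rw [h2.elim x 0]; simp

theorem ev_c3 (h : IsSES f g) {n : ℕ} (h1 : EV A M₁ n Y) (h2 : EV A M₂ (n + 1) Y) :
    EV A M₃ (n + 1) Y := by
  refine subsingleton_of_forall_eq 0 fun e => ?_
  obtain ⟨x, rfl⟩ := Ext.contravariant_sequence_exact₃ (sc_exact h) _ e
    (h2.elim _ _) (add_comm 1 n)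
  rw [h1.elim x 0]; simp

theorem ev_d2 (h : IsSES f g) {n : ℕ} (h1 : EV A Y n M₁) (h3 : EV A Y n M₃) : EV A Y n M₂ := by
  refine subsingleton_of_forall_eq 0 fun e => ?_
  obtain ⟨x, rfl⟩ := Ext.covariant_sequence_exact₂ _ (sc_exact h) e (h3.elim _ _)
  rw [h1.elim x 0]; simp

theorem ev_d1 (h : IsSES f g) {n : ℕ} (h3 : EV A Y n M₃) (h2 : EV A Y (n + 1) M₂) :
    EV A Y (n + 1) M₁ := by
  refine subsingleton_of_forall_eq 0 fun e => ?_
  obtain ⟨x, rfl⟩ := Ext.covariant_sequence_exact₁ _ (sc_exact h) e (h2.elim _ _) rfl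
  rw [h3.elim x 0]; simp

theorem ev_d3 (h : IsSES f g) {n : ℕ} (h2 : EV A Y n M₂) (h1 : EV A Y (n + 1) M₁) :
    EV A Y n M₃ := by
  refine subsingleton_of_forall_eq 0 fun e => ?_
  obtain ⟨x, rfl⟩ := Ext.covariant_sequence_exact₃ _ (sc_exact h) e rfl (h1.elim _ _)
  rw [h2.elim x 0]; simp

theorem ev_proj [Module.Projective A M₁] {n : ℕ} (hn : 1 ≤ n) : EV A M₁ n Y := by
  obtain ⟨n, rfl⟩ : ∃ m, n = m + 1 := ⟨n - 1, by omega⟩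
  have : Projective (ModuleCat.of A M₁) :=
    (IsProjective.iff_projective (R := A) M₁).1 inferInstance
  exact Ext.subsingleton_of_projective _ _ n

theorem ev_sub [Subsingleton M₁] {n : ℕ} : EV A M₁ n Y := by
  refine subsingleton_of_forall_eq 0 fun e => ?_
  have : 𝟙 (ModuleCat.of A M₁) = 0 := by
    ext x; exact Subsingleton.elim (α := M₁) _ _
  rw [← Ext.mk₀_id_comp e, this]; simp

theorem ev_congr (e : M₁ ≃ₗ[A] M₂) {n : ℕ} (h : EV A M₁ n Y) : EV A M₂ n Y := by
  refine ev_c2 (M₃ := PUnit) (f := e.toLinearMap) (g := 0) ⟨e.injective, ?_, ?_⟩ h ev_sub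
  · intro x; simp
  · exact Function.surjective_to_subsingleton _

theorem ev_pi_right {n b : ℕ} (h : EV A Y n M₁) : EV A Y n (Fin b → M₁) := by
  refine subsingleton_of_forall_eq 0 fun e => ?_
  have : 𝟙 (ModuleCat.of A (Fin b → M₁)) = ∑ i : Fin b,
      ModuleCat.ofHom (LinearMap.proj (R := A) (φ := fun _ : Fin b => M₁) i) ≫
      ModuleCat.ofHom (LinearMap.single A (fun _ : Fin b => M₁) i) := by
    ext x j
    simp [ModuleCat.hom_sum, Finset.sum_apply, Pi.single_apply]
  rw [← Ext.comp_mk₀_id e, this, Ext.mk₀_sum, Ext.comp_sum]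
  refine Finset.sum_eq_zero fun i _ => ?_
  rw [← Ext.mk₀_comp_mk₀, ← Ext.comp_assoc_of_second_deg_zero,
    h.elim (e.comp (Ext.mk₀ (ModuleCat.ofHom (LinearMap.proj (R := A)
      (φ := fun _ : Fin b => M₁) i))) (add_zero n)) 0]
  simp

theorem ev_pi_left {n b : ℕ} (h : EV A M₁ n Y) : EV A (Fin b → M₁) n Y := by
  refine subsingleton_of_forall_eq 0 fun e => ?_
  have : 𝟙 (ModuleCat.of A (Fin b → M₁)) = ∑ i : Fin b,
      ModuleCat.ofHom (LinearMap.proj (R := A) (φ := fun _ : Fin b => M₁) i) ≫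
      ModuleCat.ofHom (LinearMap.single A (fun _ : Fin b => M₁) i) := by
    ext x j
    simp [ModuleCat.hom_sum, Finset.sum_apply, Pi.single_apply]
  rw [← Ext.mk₀_id_comp e, this, Ext.mk₀_sum, Ext.sum_comp]
  refine Finset.sum_eq_zero fun i _ => ?_
  rw [← Ext.mk₀_comp_mk₀, Ext.comp_assoc_of_second_deg_zero,
    h.elim ((Ext.mk₀ (ModuleCat.ofHom (LinearMap.single A (fun _ : Fin b => M₁) i))).comp e
      (zero_add n)) 0]
  simp

/-- `Ext^1 = 0` gives extension of maps. -/
theorem ev_extend (h : IsSES f g) (h3 : EV A M₃ 1 Y) (φ : M₁ →ₗ[A] Y) :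
    ∃ ψ : M₂ →ₗ[A] Y, ψ ∘ₗ f = φ := by
  obtain ⟨x, hx⟩ := Ext.contravariant_sequence_exact₁ (sc_exact h) _
    (Ext.mk₀ (ModuleCat.ofHom φ)) (add_zero 1) (h3.elim _ _)
  obtain ⟨y, rfl⟩ := (Ext.mk₀_bijective _ _).2 x
  rw [Ext.mk₀_comp_mk₀] at hx
  have := (Ext.mk₀_bijective _ _).1 hx
  exact ⟨y.hom, congrArg ModuleCat.Hom.hom this⟩

theorem ev_of_lift (h : IsSES f g) (h2 : EV A Y 1 M₂)
    (hl : ∀ φ : Y →ₗ[A] M₃, ∃ ψ : Y →ₗ[A] M₂, g ∘ₗ ψ = φ) : EV A Y 1 M₁ := by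
  refine subsingleton_of_forall_eq 0 fun e => ?_
  obtain ⟨x, rfl⟩ := Ext.covariant_sequence_exact₁ _ (sc_exact h) e (h2.elim _ _) (zero_add 1)
  obtain ⟨φ, rfl⟩ := (Ext.mk₀_bijective _ _).2 x
  obtain ⟨ψ, hψ⟩ := hl φ.hom
  have : φ = ModuleCat.ofHom ψ ≫ (sc f g h).g := by
    ext x; exact (LinearMap.congr_fun hψ x).symm
  rw [this, ← Ext.mk₀_comp_mk₀, Ext.comp_assoc_of_second_deg_zero,
    (sc_exact h).comp_extClass]
  simp

end basic

/-- Bass-type lemma. -/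
theorem bass_prime (A : Type u) [CommRing A] [IsLocalRing A] [IsNoetherianRing A] (n : ℕ)
    (hk : ∀ i, n < i → EV A (A ⧸ maximalIdeal A) i A) (p : Ideal A) :
    p.IsPrime → ∀ i, n < i → EV A (A ⧸ p) i A := by
  induction p using WellFoundedGT.induction with
  | ind p ih =>
  intro hp i hi
  by_cases hpm : p = maximalIdeal A
  · subst hpm; exact hk i hi
  have hlt : p < maximalIdeal A := lt_of_le_of_ne (le_maximalIdeal hp.ne_top) hpm
  obtain ⟨x, hxm, hxp⟩ := SetLike.exists_of_lt hlt
  have dev : ∀ (Q : Type u) [AddCommGroup Q] [Module A Q] [Module.Finite A Q],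
      (p ⊔ Ideal.span {x} ≤ Module.annihilator A Q) → ∀ i, n < i → EV A Q i A := by
    intro Q _ _ hQ
    induction hQ using IsNoetherianRing.induction_on_isQuotientEquivQuotientPrime A with
    | subsingleton N => intro _ i _; exact ev_sub
    | quotient N q e =>
      intro h i hi
      refine ev_congr e.symm (ih q.1 ?_ q.2 i hi)
      have : Module.annihilator A N = q.1 := by
        rw [e.annihilator_eq, Ideal.annihilator_quotient]
      rw [this] at h
      refine lt_of_le_of_ne (le_sup_left.trans h) ?_
      intro hpq
      exact hxp (hpq ▸ h (Ideal.mem_sup_right (Ideal.mem_span_singleton_self x)))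
    | exact N₁ N₂ N₃ f g hf hg hfg h₁ h₃ =>
      intro h i hi
      exact ev_c2 ⟨hf, hfg, hg⟩
        (h₁ (h.trans (LinearMap.annihilator_le_of_injective f hf)) i hi)
        (h₃ (h.trans (LinearMap.annihilator_le_of_surjective g hg)) i hi)
  let mx : (A ⧸ p) →ₗ[A] (A ⧸ p) := x • LinearMap.id
  have hmx : IsSES mx (LinearMap.range mx).mkQ := by
    refine ⟨?_, ?_, Submodule.mkQ_surjective _⟩
    · rw [injective_iff_map_eq_zero]
      intro y hy
      obtain ⟨a, rfl⟩ := Ideal.Quotient.mk_surjective y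
      have : (Ideal.Quotient.mk p) (x * a) = 0 := hy
      rw [Ideal.Quotient.eq_zero_iff_mem] at this ⊢
      exact (hp.mem_or_mem this).resolve_left hxp
    · exact LinearMap.exact_map_mkQ_range _
  have hQ := dev ((A ⧸ p) ⧸ LinearMap.range mx) (by
    refine sup_le ?_ ?_
    · intro a ha
      rw [Module.mem_annihilator]
      intro y
      obtain ⟨y, rfl⟩ := Submodule.mkQ_surjective _ y
      rw [← map_smul]
      obtain ⟨b, rfl⟩ := Ideal.Quotient.mk_surjective y
      have : a • (Ideal.Quotient.mk p) b = 0 :=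
        Ideal.Quotient.eq_zero_iff_mem.2 (p.mul_mem_right b ha)
      rw [this, map_zero]
    · rw [Ideal.span_singleton_le_iff_mem, Module.mem_annihilator]
      intro y
      obtain ⟨y, rfl⟩ := Submodule.mkQ_surjective _ y
      rw [← map_smul]
      exact (Submodule.Quotient.mk_eq_zero _).2 ⟨y, rfl⟩) (i + 1) (by omega)
  have hsurj : ∀ e : Abelian.Ext.{u} (ModuleCat.of A (A ⧸ p)) (ModuleCat.of A A) i,
      ∃ e', x • e' = e := by
    intro e
    obtain ⟨e', he⟩ := Ext.contravariant_sequence_exact₁ (sc_exact hmx) _ e (add_comm 1 i)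
      (hQ.elim _ _)
    refine ⟨e', ?_⟩
    rw [← he]
    have : (sc mx _ hmx).f = x • 𝟙 (ModuleCat.of A (A ⧸ p)) := rfl
    rw [this, Ext.mk₀_smul, Ext.smul_comp, Ext.mk₀_id_comp]
  have hfin : Module.Finite A (Abelian.Ext.{u} (ModuleCat.of A (A ⧸ p)) (ModuleCat.of A A) i) := by
    infer_instance
  have hbot : (⊤ : Submodule A (Abelian.Ext.{u} (ModuleCat.of A (A ⧸ p)) (ModuleCat.of A A) i))
      = ⊥ := by
    refine Submodule.eq_bot_of_le_smul_of_le_jacobson_bot (maximalIdeal A) _ hfin.1 ?_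
      (IsLocalRing.maximalIdeal_le_jacobson _)
    intro e _
    obtain ⟨e', rfl⟩ := hsurj e
    exact Submodule.smul_mem_smul hxm trivial
  exact (Submodule.subsingleton_iff A).1 (subsingleton_of_top_eq_bot hbot)

theorem bass (A : Type u) [CommRing A] [IsLocalRing A] [IsNoetherianRing A] (n : ℕ)
    (hk : ∀ i, n < i → EV A (A ⧸ maximalIdeal A) i A)
    (Q : Type u) [AddCommGroup Q] [Module A Q] [hQ : Module.Finite A Q] :
    ∀ i, n < i → EV A Q i A := by
  induction hQ using IsNoetherianRing.induction_on_isQuotientEquivQuotientPrime A with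
  | subsingleton N => intro i _; exact ev_sub
  | quotient N q e =>
    intro i hi
    exact ev_congr e.symm (bass_prime A n hk q.1 q.2 i hi)
  | exact N₁ N₂ N₃ f g hf hg hfg h₁ h₃ =>
    intro i hi
    exact ev_c2 ⟨hf, hfg, hg⟩ (h₁ i hi) (h₃ i hi)


section gap
variable {A : Type u} [CommRing A]

theorem ev_shift {S P M Y : Type u} [AddCommGroup S] [Module A S] [AddCommGroup P] [Module A P]
    [AddCommGroup M] [Module A M] [AddCommGroup Y] [Module A Y] [Module.Projective A P]
    {f : S →ₗ[A] P} {g : P →ₗ[A] M} (h : IsSES f g) {i : ℕ} (hi : 1 ≤ i) :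
    EV A S i Y ↔ EV A M (i + 1) Y :=
  ⟨fun hS => ev_c3 h hS (ev_proj (by omega)), fun hM => ev_c1 h (ev_proj hi) hM⟩

variable [IsLocalRing A]
variable {M Y : Type u} [AddCommGroup M] [Module A M] [AddCommGroup Y] [Module A Y]

theorem ses_ker_aug (R : MinFreeRes A M) : IsSES (LinearMap.ker R.aug).subtype R.aug :=
  ⟨Submodule.subtype_injective _, LinearMap.exact_subtype_ker_map _, R.aug_surjective⟩

theorem ses_ker_zero (R : MinFreeRes A M) : IsSES (LinearMap.ker (R.d 0)).subtype
    ((R.d 0).codRestrict (LinearMap.ker R.aug) fun x => R.exact_zero.apply_apply_eq_zero x) := by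
  refine ⟨Submodule.subtype_injective _, ?_, ?_⟩
  · intro x
    rw [Subtype.ext_iff]
    exact ⟨fun h => ⟨⟨x, h⟩, rfl⟩, by rintro ⟨y, rfl⟩; exact y.2⟩
  · rintro ⟨y, hy⟩
    obtain ⟨x, hx⟩ := (R.exact_zero y).1 hy
    exact ⟨x, Subtype.ext hx⟩

theorem ses_ker_succ (R : MinFreeRes A M) (n : ℕ) : IsSES (LinearMap.ker (R.d (n + 1))).subtype
    ((R.d (n + 1)).codRestrict (LinearMap.ker (R.d n))
      fun x => (R.exact_succ n).apply_apply_eq_zero x) := by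
  refine ⟨Submodule.subtype_injective _, ?_, ?_⟩
  · intro x
    rw [Subtype.ext_iff]
    exact ⟨fun h => ⟨⟨x, h⟩, rfl⟩, by rintro ⟨y, rfl⟩; exact y.2⟩
  · rintro ⟨y, hy⟩
    obtain ⟨x, hx⟩ := (R.exact_succ n y).1 hy
    exact ⟨x, Subtype.ext hx⟩

theorem ev_ker (R : MinFreeRes A M) (n i : ℕ) (hi : 1 ≤ i) :
    EV A (LinearMap.ker (R.d n)) i Y ↔ EV A M (i + (n + 2)) Y := by
  induction n generalizing i with
  | zero =>
    rw [ev_shift (ses_ker_zero R) hi, ev_shift (ses_ker_aug R) (by omega)]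
  | succ n ih =>
    rw [ev_shift (ses_ker_succ R n) hi, ih (i + 1) (by omega)]
    have : i + 1 + (n + 2) = i + (n + 1 + 2) := by omega
    rw [this]

theorem ev_syz {S : Type u} [AddCommGroup S] [Module A S] (n : ℕ) (h : IsSyzygyOf A M S n)
    (i : ℕ) (hi : 1 ≤ i) : EV A S i Y ↔ EV A M (i + n) Y := by
  match n, h with
  | 0, h =>
    obtain ⟨e⟩ := h
    exact ⟨ev_congr e, ev_congr e.symm⟩
  | 1, h =>
    obtain ⟨R, ⟨e⟩⟩ := h
    rw [← ev_shift (ses_ker_aug R) hi]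
    exact ⟨ev_congr e, ev_congr e.symm⟩
  | n + 2, h =>
    obtain ⟨R, ⟨e⟩⟩ := h
    rw [← ev_ker R n i hi]
    exact ⟨ev_congr e, ev_congr e.symm⟩

theorem ev_finite_pd (h : HasFiniteProjDim A M) : ∃ t : ℕ, ∀ (Y : Type u) [AddCommGroup Y]
    [Module A Y], ∀ i, t < i → EV A M i Y := by
  obtain ⟨t, R, hR⟩ := h
  refine ⟨t + 2, fun Y _ _ i hi => ?_⟩
  have hb := hR (t + 1) (by omega)
  have : Subsingleton (Fin (R.b (t + 1)) → A) := by
    rw [hb]; infer_instance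
  have h1 : EV A (LinearMap.ker (R.d t)) (i - (t + 2)) Y := ev_sub
  rw [ev_ker R t _ (by omega)] at h1
  rwa [show i - (t + 2) + (t + 2) = i by omega] at h1

theorem gap (M : ModuleCat.{u} A) (hM : HasRedCxCat M) :
    ∃ c : ℕ, ∀ (Y : Type u) [AddCommGroup Y] [Module A Y] (s : ℕ),
      (∀ i, s < i → i ≤ s + c → EV A M i Y) → ∀ i, s < i → EV A M i Y := by
  induction hM with
  | of_finite_projDim M hfg h =>
    obtain ⟨t, ht⟩ := ev_finite_pd h
    refine ⟨t, fun Y _ _ s hs i hi => ?_⟩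
    by_cases h : i ≤ s + t
    · exact hs i hi h
    · exact ht Y i (by omega)
  | step M K S n hfg hKfg hpos hfin hsyz f g hses hcx hdepth hK ih =>
    obtain ⟨c, hc⟩ := ih
    refine ⟨c + n + 1, fun Y _ _ s hs => ?_⟩
    have hKv : ∀ i, s < i → EV A K i Y := by
      refine hc Y s fun i h1 h2 => ?_
      exact ev_c2 hses (hs i h1 (by omega))
        ((ev_syz n hsyz i (by omega)).2 (hs (i + n) (by omega) (by omega)))
    intro i
    induction i using Nat.strong_induction_on with
    | _ i ih2 =>
    intro hi
    by_cases h : i ≤ s + (c + n + 1)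
    · exact hs i hi h
    · obtain ⟨m, rfl⟩ : ∃ m, i = m + 1 + n := ⟨i - n - 1, by omega⟩
      rw [← ev_syz n hsyz (m + 1) (by omega)]
      exact ev_c3 hses (ih2 m (by omega) (by omega)) (hKv (m + 1) (by omega))

end gap

section main
variable {A : Type u} [CommRing A]

/-- A chain of syzygies of `N` given by finite free covers. -/
structure SyzChain (A : Type u) [CommRing A] (N : Type u) [AddCommGroup N] [Module A N] where
  Om : ℕ → ModuleCat.{u} A
  b : ℕ → ℕ
  inc : ∀ n, Om (n + 1) →ₗ[A] (Fin (b n) → A)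
  pr : ∀ n, (Fin (b n) → A) →ₗ[A] Om n
  ses : ∀ n, IsSES (inc n) (pr n)
  fin : ∀ n, Module.Finite A (Om n)
  zero : N ≃ₗ[A] Om 0

theorem exists_chain [IsNoetherianRing A] (N : Type u) [AddCommGroup N] [Module A N]
    [Module.Finite A N] : Nonempty (SyzChain A N) := by
  have key : ∀ X : {X : ModuleCat.{u} A // Module.Finite A X},
      ∃ (X' : {X : ModuleCat.{u} A // Module.Finite A X}) (b : ℕ)
        (i : X'.1 →ₗ[A] (Fin b → A)) (p : (Fin b → A) →ₗ[A] X.1), IsSES i p := by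
    rintro ⟨X, hX⟩
    obtain ⟨b, p, hp⟩ := Module.Finite.exists_fin' A X
    refine ⟨⟨ModuleCat.of A (LinearMap.ker p), ?_⟩, b, (LinearMap.ker p).subtype, p, ?_⟩
    · change Module.Finite A (LinearMap.ker p)
      infer_instance
    · exact ⟨Submodule.subtype_injective _, LinearMap.exact_subtype_ker_map _, hp⟩
  choose nx b i p h using key
  let O : ℕ → {X : ModuleCat.{u} A // Module.Finite A X} := fun n =>
    Nat.rec ⟨ModuleCat.of A N, inferInstanceAs (Module.Finite A N)⟩ (fun _ X => nx X) n
  exact ⟨{ Om := fun n => (O n).1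
           b := fun n => b (O n)
           inc := fun n => i (O n)
           pr := fun n => p (O n)
           ses := fun n => h (O n)
           fin := fun n => (O n).2
           zero := LinearEquiv.refl A N }⟩

theorem chain_left {N Y : Type u} [AddCommGroup N] [Module A N] [AddCommGroup Y] [Module A Y]
    (C : SyzChain A N) (m i : ℕ) (hi : 1 ≤ i) : EV A (C.Om m) i Y ↔ EV A N (i + m) Y := by
  induction m generalizing i with
  | zero => exact ⟨ev_congr C.zero.symm, ev_congr C.zero⟩
  | succ m ih =>
    rw [ev_shift (C.ses m) hi, ih (i + 1) (by omega), show i + 1 + m = i + (m + 1) by omega]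

theorem ev_congr_right {X M₁ M₂ : Type u} [AddCommGroup X] [Module A X] [AddCommGroup M₁]
    [Module A M₁] [AddCommGroup M₂] [Module A M₂] (e : M₁ ≃ₗ[A] M₂) {n : ℕ}
    (h : EV A X n M₁) : EV A X n M₂ := by
  refine subsingleton_of_forall_eq 0 fun x => ?_
  have : 𝟙 (ModuleCat.of A M₂) =
      ModuleCat.ofHom e.symm.toLinearMap ≫ ModuleCat.ofHom e.toLinearMap := by
    ext y; simp
  rw [← Ext.comp_mk₀_id x, this, ← Ext.mk₀_comp_mk₀, ← Ext.comp_assoc_of_second_deg_zero,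
    h.elim (x.comp (Ext.mk₀ (ModuleCat.ofHom e.symm.toLinearMap)) (add_zero n)) 0]
  simp

/-- pairing -/
theorem trace_formula {b : ℕ} (f : (Fin b → A) →ₗ[A] (Fin b → A)) :
    LinearMap.trace A (Fin b → A) f = ∑ i, f (Pi.single i 1) i := by
  rw [LinearMap.trace_eq_matrix_trace A (Pi.basisFun A (Fin b)), Matrix.trace]
  refine Finset.sum_congr rfl fun i _ => ?_
  simp

variable {X : Type u} [AddCommGroup X] [Module A X]

/-- functional attached to `ψ : X → A^b` -/
noncomputable def func {b : ℕ} (ψ : X →ₗ[A] (Fin b → A)) :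
    ((Fin b → A) →ₗ[A] X) →ₗ[A] A :=
  (LinearMap.trace A (Fin b → A)) ∘ₗ (LinearMap.llcomp A _ _ _ ψ)

theorem func_apply {b : ℕ} (ψ : X →ₗ[A] (Fin b → A)) (h : (Fin b → A) →ₗ[A] X) :
    func ψ h = LinearMap.trace A (Fin b → A) (ψ ∘ₗ h) := rfl

theorem func_smulRight {b : ℕ} (ψ : X →ₗ[A] (Fin b → A)) (i : Fin b) (x : X) :
    func ψ ((LinearMap.proj (R := A) (φ := fun _ : Fin b => A) i).smulRight x) = ψ x i := by
  rw [func_apply, trace_formula, Finset.sum_eq_single i]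
  · simp
  · intro j _ hj
    simp [Pi.single_apply, hj.symm]
  · simp

theorem func_surj {b : ℕ} (Φ : ((Fin b → A) →ₗ[A] X) →ₗ[A] A) :
    ∃ χ : X →ₗ[A] (Fin b → A), func χ = Φ := by
  let χ : X →ₗ[A] (Fin b → A) := LinearMap.pi fun i => Φ ∘ₗ
    (LinearMap.smulRightₗ (R := A) (M := X) (M₂ := Fin b → A)
      (LinearMap.proj (R := A) (φ := fun _ : Fin b => A) i))
  refine ⟨χ, ?_⟩
  ext h
  rw [func_apply, trace_formula]
  have hh : h = ∑ i, (LinearMap.proj (R := A) (φ := fun _ : Fin b => A) i).smulRight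
      (h (Pi.single i 1)) := by
    refine LinearMap.pi_ext' fun j => ?_
    ext
    simp [Pi.single_apply]
  conv_rhs => rw [hh, map_sum]
  rfl

theorem func_inj {b : ℕ} {ψ χ : X →ₗ[A] (Fin b → A)} (h : func ψ = func χ) : ψ = χ := by
  ext x i
  rw [← func_smulRight, h, func_smulRight]

theorem func_comp {b c : ℕ} (χ : X →ₗ[A] (Fin c → A)) (d : (Fin c → A) →ₗ[A] (Fin b → A))
    (h : (Fin b → A) →ₗ[A] X) : func (d ∘ₗ χ) h = func χ (h ∘ₗ d) := by
  rw [func_apply, func_apply, LinearMap.comp_assoc, LinearMap.trace_comp_comm',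
    LinearMap.comp_assoc]

theorem hom_ses {N : Type u} [AddCommGroup N] [Module A N] (C : SyzChain A N) (m : ℕ)
    (h : EV A (C.Om m) 1 X) :
    IsSES ((LinearMap.lcomp A X (C.pr m)) : (C.Om m →ₗ[A] X) →ₗ[A] _)
      ((LinearMap.lcomp A X (C.inc m)) : ((Fin (C.b m) → A) →ₗ[A] X) →ₗ[A] _) := by
  have hs := C.ses m
  refine ⟨?_, ?_, ?_⟩
  · intro f g hfg
    ext y
    obtain ⟨z, rfl⟩ := hs.2.2 y
    exact LinearMap.congr_fun hfg z
  · exact LinearMap.exact_lcomp_of_exact_of_surjective X hs.2.1 hs.2.2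
  · intro φ
    obtain ⟨ψ, hψ⟩ := ev_extend hs h φ
    exact ⟨ψ, hψ⟩

theorem lift_exists [IsNoetherianRing A] [Module.Finite A X] (d : ℕ)
    (hd : ∀ (Q : Type u) [AddCommGroup Q] [Module A Q] [Module.Finite A Q],
      ∀ i, d < i → EV A Q i A)
    (hX : ∀ i, 1 ≤ i → EV A X i A)
    {N : Type u} [AddCommGroup N] [Module A N] (C : SyzChain A N)
    (m₀ : ℕ) (hm₀ : ∀ m, m₀ ≤ m → EV A (C.Om m) 1 X) (m : ℕ) (hm : m₀ ≤ m)
    (φ : X →ₗ[A] C.Om (m + 2)) : ∃ χ : X →ₗ[A] (Fin (C.b (m + 2)) → A),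
      C.pr (m + 2) ∘ₗ χ = φ := by
  have hF : ∀ (b i : ℕ), 1 ≤ i → EV A ((Fin b → A) →ₗ[A] X) i A := by
    intro b i hi
    exact ev_congr ((LinearEquiv.piCongrRight fun _ : Fin b =>
      (LinearMap.ringLmapEquivSelf A A X).symm).trans (LinearMap.lsum A (fun _ : Fin b => A) A)) (ev_pi_left (b := b) (hX i hi))
  have hH : ∀ r m i, m₀ ≤ m → 1 ≤ i → d < i + r → EV A (C.Om m →ₗ[A] X) i A := by
    intro r
    induction r with
    | zero =>
      intro m i _ _ h
      have := C.fin m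
      exact hd _ i h
    | succ r ih =>
      intro m i hm hi h
      exact ev_c1 (hom_ses C m (hm₀ m hm)) (hF _ i hi) (ih (m + 1) (i + 1) (by omega) (by omega)
        (by omega))
  have s0 := hom_ses C m (hm₀ m hm)
  have s1 := hom_ses C (m + 1) (hm₀ (m + 1) (by omega))
  have s2 := hom_ses C (m + 2) (hm₀ (m + 2) (by omega))
  let ψ := C.inc (m + 1) ∘ₗ φ
  -- `func ψ` kills the maps coming from `Om (m+1)`
  have hker : ∀ h : C.Om (m + 1) →ₗ[A] X, func ψ (h ∘ₗ C.pr (m + 1)) = 0 := by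
    intro h
    obtain ⟨h', rfl⟩ := s0.2.2 h
    have : (LinearMap.lcomp A X (C.inc m) h') ∘ₗ C.pr (m + 1) =
      h' ∘ₗ (C.inc m ∘ₗ C.pr (m + 1)) := rfl
    rw [this, ← func_comp]
    have h0 : (C.inc m ∘ₗ C.pr (m + 1)) ∘ₗ ψ = 0 := by
      ext1 x
      change C.inc m (C.pr (m + 1) (C.inc (m + 1) (φ x))) = 0
      rw [(C.ses (m + 1)).2.1.apply_apply_eq_zero, map_zero]
    rw [h0, func_apply, LinearMap.zero_comp, map_zero]
  -- so it factors through `Om (m+2)`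
  obtain ⟨Ψ', hΨ'⟩ : ∃ Ψ' : (C.Om (m + 2) →ₗ[A] X) →ₗ[A] A,
      ∀ h : (Fin (C.b (m + 1)) → A) →ₗ[A] X, Ψ' (h ∘ₗ C.inc (m + 1)) = func ψ h := by
    have hex := LinearMap.exact_lcomp_of_exact_of_surjective A s1.2.1 s1.2.2
    obtain ⟨Ψ', h⟩ := (hex (func ψ)).1 (by
      ext h
      exact hker h)
    exact ⟨Ψ', fun k => LinearMap.congr_fun h k⟩
  obtain ⟨Φ, hΦ⟩ := ev_extend s2 (hH d (m + 3) 1 (by omega) le_rfl (by omega)) Ψ'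
  obtain ⟨χ, rfl⟩ := func_surj Φ
  refine ⟨χ, ?_⟩
  have heq : (C.inc (m + 1) ∘ₗ C.pr (m + 2)) ∘ₗ χ = ψ := by
    apply func_inj
    ext h
    rw [func_comp, ← hΨ' h, ← hΦ]
    rfl
  ext x
  exact (C.ses (m + 1)).1 (LinearMap.congr_fun heq x)

theorem core [IsNoetherianRing A] (d : ℕ)
    (hd : ∀ (Q : Type u) [AddCommGroup Q] [Module A Q] [Module.Finite A Q],
      ∀ i, d < i → EV A Q i A)
    (M N : Type u) [AddCommGroup M] [Module A M] [Module.Finite A M]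
    [AddCommGroup N] [Module A N] [Module.Finite A N]
    (hgap : ∃ c : ℕ, ∀ (Y : Type u) [AddCommGroup Y] [Module A Y] (s : ℕ),
      (∀ i, s < i → i ≤ s + c → EV A M i Y) → ∀ i, s < i → EV A M i Y)
    (i₀ : ℕ) (hNM : ∀ i, i₀ < i → EV A N i M) : ∀ i, d < i → EV A M i N := by
  obtain ⟨CM⟩ := exists_chain (A := A) M
  obtain ⟨C⟩ := exists_chain (A := A) N
  obtain ⟨c, hc⟩ := hgap
  have hfree : ∀ (Q : Type u) [AddCommGroup Q] [Module A Q] [Module.Finite A Q] (b i : ℕ),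
      d < i → EV A Q i (Fin b → A) := fun Q _ _ _ b i hi => ev_pi_right (hd Q i hi)
  have hNr : ∀ r i, i₀ + d + r < i → EV A N i (CM.Om r) := by
    intro r
    induction r with
    | zero =>
      intro i hi
      exact ev_congr_right CM.zero (hNM i (by omega))
    | succ r ih =>
      intro i hi
      obtain ⟨j, rfl⟩ : ∃ j, i = j + 1 := ⟨i - 1, by omega⟩
      exact ev_d1 (CM.ses r) (ih j (by omega)) (hfree N _ _ (by omega))
  have hXfin := CM.fin d
  have hX : ∀ i, 1 ≤ i → EV A (CM.Om d) i A := fun i hi =>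
    (chain_left CM d i hi).2 (hd M _ (by omega))
  have hXfree : ∀ b i, 1 ≤ i → EV A (CM.Om d) i (Fin b → A) := fun b i hi =>
    ev_pi_right (hX i hi)
  have hm₀ : ∀ m, i₀ + d + d ≤ m → EV A (C.Om m) 1 (CM.Om d) := fun m hm =>
    (chain_left C m 1 le_rfl).2 (hNr d _ (by omega))
  have h1 : ∀ m, i₀ + d + d ≤ m → EV A (CM.Om d) 1 (C.Om (m + 3)) := fun m hm =>
    ev_of_lift (C.ses (m + 2)) (hXfree _ 1 le_rfl)
      (lift_exists d hd hX C _ hm₀ m hm)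
  have hi : ∀ i m, i₀ + d + d ≤ m → EV A (CM.Om d) (i + 1) (C.Om (m + 3 + i)) := by
    intro i
    induction i with
    | zero => exact h1
    | succ i ih =>
      intro m hm
      exact ev_d1 (C.ses (m + 3 + i)) (ih m hm) (hXfree _ _ (by omega))
  let j := i₀ + d + d + 3 + c
  have hj : ∀ i, d < i → EV A M i (C.Om j) := by
    refine hc _ d fun i h1 h2 => ?_
    have h3 := hi (i - d - 1) (i₀ + d + d + (c - (i - d - 1))) (by omega)
    rw [chain_left CM d _ (by omega), show i - d - 1 + 1 + d = i by omega,
      show i₀ + d + d + (c - (i - d - 1)) + 3 + (i - d - 1) = j by omega] at h3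
    exact h3
  have hdown : ∀ r, r ≤ j → ∀ i, d < i → EV A M i (C.Om (j - r)) := by
    intro r
    induction r with
    | zero => intro _ i hi; exact hj i hi
    | succ r ih =>
      intro hr i hi
      have h3 := ih (by omega) (i + 1) (by omega)
      rw [show j - r = j - (r + 1) + 1 by omega] at h3
      exact ev_d3 (C.ses (j - (r + 1))) (hfree M _ i hi) h3
  intro i hi
  have h3 := hdown j le_rfl i hi
  rw [Nat.sub_self] at h3
  exact ev_congr_right C.zero.symm h3

end main

theorem one_direction (A : Type u) [CommRing A] [IsLocalRing A] [IsNoetherianRing A]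
    (hA : IsGorenstein A)
    (M : Type u) [AddCommGroup M] [Module A M] [Module.Finite A M]
    (hM : HasRedCx A M)
    (N : Type u) [AddCommGroup N] [Module A N] [Module.Finite A N]
    (h : ∀ᶠ i in Filter.atTop, extVanish A N i M) :
    ∀ᶠ i in Filter.atTop, extVanish A M i N := by
  obtain ⟨d, hd⟩ := hA
  obtain ⟨i₀, hi₀⟩ := Filter.eventually_atTop.1 h
  have hk : ∀ i, d < i → EV A (A ⧸ maximalIdeal A) i A := fun i hi =>
    (ev_bridge (M₁ := ResidueField A) i (by omega)).1 (hd i hi)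
  have := core d (fun Q _ _ _ => bass A d hk Q) M N (gap _ hM) i₀
    (fun i hi => (ev_bridge i (by omega)).1 (hi₀ i hi.le))
  exact Filter.eventually_atTop.2 ⟨d + 1, fun i hi =>
    (ev_bridge i (by omega)).2 (this i (by omega))⟩

end Helpers

/-- **Proposition 2.5 (Theorem 3.5 of [Bergh1])**: over a Gorenstein local ring `A`,
if `M` has reducible complexity and `N` is any finitely generated module, then the
vanishing of `Ext^i_A(N,M)` for `i ≫ 0` implies the vanishing of `Ext^i_A(M,N)` for
`i ≫ 0`. In particular, symmetry in the vanishing of cohomology holds for modules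
having reducible complexity. -/
theorem ext_symmetry_of_gorenstein_of_hasRedCx
    (A : Type u) [CommRing A] [IsLocalRing A] [IsNoetherianRing A]
    (hA : IsGorenstein A)
    (M : Type u) [AddCommGroup M] [Module A M] [Module.Finite A M]
    (hM : HasRedCx A M)
    (N : Type u) [AddCommGroup N] [Module A N] [Module.Finite A N] :
    ((∀ᶠ i in Filter.atTop, extVanish A N i M) →
      (∀ᶠ i in Filter.atTop, extVanish A M i N)) ∧
    (HasRedCx A N →
      ((∀ᶠ i in Filter.atTop, extVanish A M i N) ↔
        (∀ᶠ i in Filter.atTop, extVanish A N i M))) := by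

  exact ⟨one_direction A hA M hM N, fun hN =>
    ⟨one_direction A hA N hN M, one_direction A hA M hM N⟩⟩
end

section
/- Let k be a field, α ∈ k a nonzero element, and A = k[X_1,…,X_5]/𝔞 where 𝔞 is generated by the quadratic forms X_1², X_2², X_5², X_3X_4, X_3X_5, X_4X_5, X_1X_4+X_2X_4, αX_1X_3+X_2X_3, X_3²−X_2X_5+αX_1X_5, X_4²−X_2X_5+X_1X_5. Then A is a local Gorenstein (selfinjective) finite-dimensional k-algebra, the complex ⋯ → A² →^{d_{n+1}} A² →^{d_n} A² → ⋯ with d_n given by the matrix ((x_1, α^n x_3 + x_4),(0, x_2)) is exact, and the module M = Im d_0 has complexity one. Moreover, if α has infinite multiplicative order in k, then M does not have reducible complexity. -/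
set_option maxHeartbeats 1000000
set_option synthInstance.maxHeartbeats 400000

open CategoryTheory Opposite Filter IsLocalRing

universe u

open ComplexityTest

namespace ComplexityTest

section Gasharov

open MvPolynomial in
/-- The Gasharov–Peeva ideal `𝔞 ⊆ k[X_1, …, X_5]` generated by the ten quadratic forms
`X_1², X_2², X_5², X_3X_4, X_3X_5, X_4X_5, X_1X_4 + X_2X_4, αX_1X_3 + X_2X_3,
X_3² - X_2X_5 + αX_1X_5, X_4² - X_2X_5 + X_1X_5` (variables indexed by `0, …, 4`). -/
noncomputable def gasharovIdeal (k : Type u) [Field k] (α : k) :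
    Ideal (MvPolynomial (Fin 5) k) :=
  Ideal.span
    {X 0 ^ 2, X 1 ^ 2, X 4 ^ 2, X 2 * X 3, X 2 * X 4, X 3 * X 4,
      X 0 * X 3 + X 1 * X 3, C α * (X 0 * X 2) + X 1 * X 2,
      X 2 ^ 2 - X 1 * X 4 + C α * (X 0 * X 4),
      X 3 ^ 2 - X 1 * X 4 + X 0 * X 4}

/-- The Gasharov–Peeva algebra `A = k[X_1, …, X_5]/𝔞`. -/
abbrev gasharovRing (k : Type u) [Field k] (α : k) : Type u :=
  MvPolynomial (Fin 5) k ⧸ gasharovIdeal k α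

/-- The image of the variable `X_i` in the Gasharov–Peeva algebra. -/
noncomputable def gx (k : Type u) [Field k] (α : k) (i : Fin 5) : gasharovRing k α :=
  Ideal.Quotient.mk (gasharovIdeal k α) (MvPolynomial.X i)

/-- The differential `d_n : A² → A²` given by the matrix
`(x_1, α^n x_3 + x_4; 0, x_2)`. -/
noncomputable def gasharovD (k : Type u) [Field k] (α : k) (n : ℤ) :
    (Fin 2 → gasharovRing k α) →ₗ[gasharovRing k α] (Fin 2 → gasharovRing k α) :=
  Matrix.toLin'
    !![gx k α 0, algebraMap k (gasharovRing k α) (α ^ n) * gx k α 2 + gx k α 3;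
       0, gx k α 1]

end Gasharov

end ComplexityTest

namespace ComplexityTest

/-- Explicit coordinate model of the Gasharov–Peeva algebra. -/
@[ext]
structure GB (k : Type u) (α : k) where
  c0 : k
  c1 : k
  c2 : k
  c3 : k
  c4 : k
  c5 : k
  c6 : k
  c7 : k
  c8 : k
  c9 : k
  c10 : k
  c11 : k

namespace GB

variable {k : Type u} [Field k] {α : k}

instance : Zero (GB k α) := ⟨⟨0, 0, 0, 0, 0, 0, 0, 0, 0, 0, 0, 0⟩⟩
instance : One (GB k α) := ⟨⟨1, 0, 0, 0, 0, 0, 0, 0, 0, 0, 0, 0⟩⟩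
instance : Add (GB k α) := ⟨fun a b => ⟨a.c0 + b.c0, a.c1 + b.c1, a.c2 + b.c2, a.c3 + b.c3,
  a.c4 + b.c4, a.c5 + b.c5, a.c6 + b.c6, a.c7 + b.c7, a.c8 + b.c8, a.c9 + b.c9, a.c10 + b.c10,
  a.c11 + b.c11⟩⟩
instance : Neg (GB k α) := ⟨fun a => ⟨-a.c0, -a.c1, -a.c2, -a.c3, -a.c4, -a.c5, -a.c6, -a.c7,
  -a.c8, -a.c9, -a.c10, -a.c11⟩⟩
instance : Mul (GB k α) := ⟨fun a b => ⟨a.c0 * b.c0,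
  a.c0 * b.c1 + a.c1 * b.c0,
  a.c0 * b.c2 + a.c2 * b.c0,
  a.c0 * b.c3 + a.c3 * b.c0,
  a.c0 * b.c4 + a.c4 * b.c0,
  a.c0 * b.c5 + a.c5 * b.c0,
  a.c0 * b.c6 + a.c6 * b.c0 + (a.c1 * b.c2 + a.c2 * b.c1),
  a.c0 * b.c7 + a.c7 * b.c0 + (a.c1 * b.c3 + a.c3 * b.c1) - α * (a.c2 * b.c3 + a.c3 * b.c2),
  a.c0 * b.c8 + a.c8 * b.c0 + (a.c1 * b.c4 + a.c4 * b.c1) - (a.c2 * b.c4 + a.c4 * b.c2),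
  a.c0 * b.c9 + a.c9 * b.c0 + (a.c1 * b.c5 + a.c5 * b.c1) - α * (a.c3 * b.c3) - a.c4 * b.c4,
  a.c0 * b.c10 + a.c10 * b.c0 + (a.c2 * b.c5 + a.c5 * b.c2) + a.c3 * b.c3 + a.c4 * b.c4,
  a.c0 * b.c11 + a.c11 * b.c0 + (a.c1 * b.c10 + a.c10 * b.c1) + (a.c2 * b.c9 + a.c9 * b.c2)
    + (a.c3 * b.c7 + a.c7 * b.c3) + (a.c4 * b.c8 + a.c8 * b.c4) + (a.c5 * b.c6 + a.c6 * b.c5)⟩⟩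

@[simp] theorem zero_c0 : (0 : GB k α).c0 = 0 := rfl
@[simp] theorem one_c0 : (1 : GB k α).c0 = 1 := rfl
@[simp] theorem add_c0 (a b : GB k α) : (a + b).c0 = a.c0 + b.c0 := rfl
@[simp] theorem neg_c0 (a : GB k α) : (-a).c0 = -a.c0 := rfl
@[simp] theorem mul_c0 (a b : GB k α) : (a * b).c0 =
    a.c0 * b.c0 := rfl
@[simp] theorem zero_c1 : (0 : GB k α).c1 = 0 := rfl
@[simp] theorem one_c1 : (1 : GB k α).c1 = 0 := rfl
@[simp] theorem add_c1 (a b : GB k α) : (a + b).c1 = a.c1 + b.c1 := rfl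
@[simp] theorem neg_c1 (a : GB k α) : (-a).c1 = -a.c1 := rfl
@[simp] theorem mul_c1 (a b : GB k α) : (a * b).c1 =
    a.c0 * b.c1 + a.c1 * b.c0 := rfl
@[simp] theorem zero_c2 : (0 : GB k α).c2 = 0 := rfl
@[simp] theorem one_c2 : (1 : GB k α).c2 = 0 := rfl
@[simp] theorem add_c2 (a b : GB k α) : (a + b).c2 = a.c2 + b.c2 := rfl
@[simp] theorem neg_c2 (a : GB k α) : (-a).c2 = -a.c2 := rfl
@[simp] theorem mul_c2 (a b : GB k α) : (a * b).c2 =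
    a.c0 * b.c2 + a.c2 * b.c0 := rfl
@[simp] theorem zero_c3 : (0 : GB k α).c3 = 0 := rfl
@[simp] theorem one_c3 : (1 : GB k α).c3 = 0 := rfl
@[simp] theorem add_c3 (a b : GB k α) : (a + b).c3 = a.c3 + b.c3 := rfl
@[simp] theorem neg_c3 (a : GB k α) : (-a).c3 = -a.c3 := rfl
@[simp] theorem mul_c3 (a b : GB k α) : (a * b).c3 =
    a.c0 * b.c3 + a.c3 * b.c0 := rfl
@[simp] theorem zero_c4 : (0 : GB k α).c4 = 0 := rfl
@[simp] theorem one_c4 : (1 : GB k α).c4 = 0 := rfl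
@[simp] theorem add_c4 (a b : GB k α) : (a + b).c4 = a.c4 + b.c4 := rfl
@[simp] theorem neg_c4 (a : GB k α) : (-a).c4 = -a.c4 := rfl
@[simp] theorem mul_c4 (a b : GB k α) : (a * b).c4 =
    a.c0 * b.c4 + a.c4 * b.c0 := rfl
@[simp] theorem zero_c5 : (0 : GB k α).c5 = 0 := rfl
@[simp] theorem one_c5 : (1 : GB k α).c5 = 0 := rfl
@[simp] theorem add_c5 (a b : GB k α) : (a + b).c5 = a.c5 + b.c5 := rfl
@[simp] theorem neg_c5 (a : GB k α) : (-a).c5 = -a.c5 := rfl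
@[simp] theorem mul_c5 (a b : GB k α) : (a * b).c5 =
    a.c0 * b.c5 + a.c5 * b.c0 := rfl
@[simp] theorem zero_c6 : (0 : GB k α).c6 = 0 := rfl
@[simp] theorem one_c6 : (1 : GB k α).c6 = 0 := rfl
@[simp] theorem add_c6 (a b : GB k α) : (a + b).c6 = a.c6 + b.c6 := rfl
@[simp] theorem neg_c6 (a : GB k α) : (-a).c6 = -a.c6 := rfl
@[simp] theorem mul_c6 (a b : GB k α) : (a * b).c6 =
    a.c0 * b.c6 + a.c6 * b.c0 + (a.c1 * b.c2 + a.c2 * b.c1) := rfl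
@[simp] theorem zero_c7 : (0 : GB k α).c7 = 0 := rfl
@[simp] theorem one_c7 : (1 : GB k α).c7 = 0 := rfl
@[simp] theorem add_c7 (a b : GB k α) : (a + b).c7 = a.c7 + b.c7 := rfl
@[simp] theorem neg_c7 (a : GB k α) : (-a).c7 = -a.c7 := rfl
@[simp] theorem mul_c7 (a b : GB k α) : (a * b).c7 =
    a.c0 * b.c7 + a.c7 * b.c0 + (a.c1 * b.c3 + a.c3 * b.c1) - α * (a.c2 * b.c3 + a.c3 * b.c2) := rfl
@[simp] theorem zero_c8 : (0 : GB k α).c8 = 0 := rfl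
@[simp] theorem one_c8 : (1 : GB k α).c8 = 0 := rfl
@[simp] theorem add_c8 (a b : GB k α) : (a + b).c8 = a.c8 + b.c8 := rfl
@[simp] theorem neg_c8 (a : GB k α) : (-a).c8 = -a.c8 := rfl
@[simp] theorem mul_c8 (a b : GB k α) : (a * b).c8 =
    a.c0 * b.c8 + a.c8 * b.c0 + (a.c1 * b.c4 + a.c4 * b.c1) - (a.c2 * b.c4 + a.c4 * b.c2) := rfl
@[simp] theorem zero_c9 : (0 : GB k α).c9 = 0 := rfl
@[simp] theorem one_c9 : (1 : GB k α).c9 = 0 := rfl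
@[simp] theorem add_c9 (a b : GB k α) : (a + b).c9 = a.c9 + b.c9 := rfl
@[simp] theorem neg_c9 (a : GB k α) : (-a).c9 = -a.c9 := rfl
@[simp] theorem mul_c9 (a b : GB k α) : (a * b).c9 =
    a.c0 * b.c9 + a.c9 * b.c0 + (a.c1 * b.c5 + a.c5 * b.c1) - α * (a.c3 * b.c3) - a.c4 * b.c4 := rfl
@[simp] theorem zero_c10 : (0 : GB k α).c10 = 0 := rfl
@[simp] theorem one_c10 : (1 : GB k α).c10 = 0 := rfl
@[simp] theorem add_c10 (a b : GB k α) : (a + b).c10 = a.c10 + b.c10 := rfl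
@[simp] theorem neg_c10 (a : GB k α) : (-a).c10 = -a.c10 := rfl
@[simp] theorem mul_c10 (a b : GB k α) : (a * b).c10 =
    a.c0 * b.c10 + a.c10 * b.c0 + (a.c2 * b.c5 + a.c5 * b.c2) + a.c3 * b.c3 + a.c4 * b.c4 := rfl
@[simp] theorem zero_c11 : (0 : GB k α).c11 = 0 := rfl
@[simp] theorem one_c11 : (1 : GB k α).c11 = 0 := rfl
@[simp] theorem add_c11 (a b : GB k α) : (a + b).c11 = a.c11 + b.c11 := rfl
@[simp] theorem neg_c11 (a : GB k α) : (-a).c11 = -a.c11 := rfl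
@[simp] theorem mul_c11 (a b : GB k α) : (a * b).c11 =
    a.c0 * b.c11 + a.c11 * b.c0 + (a.c1 * b.c10 + a.c10 * b.c1) + (a.c2 * b.c9 + a.c9 * b.c2) + (a.c3 * b.c7 + a.c7 * b.c3) + (a.c4 * b.c8 + a.c8 * b.c4) + (a.c5 * b.c6 + a.c6 * b.c5) := rfl

instance : CommRing (GB k α) where
  add_assoc a b c := by ext <;> simp <;> ring
  zero_add a := by ext <;> simp
  add_zero a := by ext <;> simp
  add_comm a b := by ext <;> simp <;> ring
  neg_add_cancel a := by ext <;> simp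
  left_distrib a b c := by ext <;> simp <;> ring
  right_distrib a b c := by ext <;> simp <;> ring
  zero_mul a := by ext <;> simp
  mul_zero a := by ext <;> simp
  mul_assoc a b c := by ext <;> simp <;> ring
  one_mul a := by ext <;> simp
  mul_one a := by ext <;> simp
  mul_comm a b := by ext <;> simp <;> ring
  nsmul := nsmulRec
  zsmul := zsmulRec

/-- The inclusion of scalars. -/
def scal : k →+* GB k α where
  toFun c := ⟨c, 0, 0, 0, 0, 0, 0, 0, 0, 0, 0, 0⟩
  map_one' := rfl
  map_zero' := rfl
  map_add' a b := by ext <;> simp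
  map_mul' a b := by ext <;> simp

instance : Algebra k (GB k α) := scal.toAlgebra

theorem algebraMap_eq (c : k) :
    algebraMap k (GB k α) c = ⟨c, 0, 0, 0, 0, 0, 0, 0, 0, 0, 0, 0⟩ := rfl

theorem smul_eq (c : k) (b : GB k α) :
    c • b = ⟨c, 0, 0, 0, 0, 0, 0, 0, 0, 0, 0, 0⟩ * b := Algebra.smul_def c b

@[simp] theorem sub_c0 (a b : GB k α) : (a - b).c0 = a.c0 - b.c0 := by simp [sub_eq_add_neg]
@[simp] theorem sub_c1 (a b : GB k α) : (a - b).c1 = a.c1 - b.c1 := by simp [sub_eq_add_neg]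
@[simp] theorem sub_c2 (a b : GB k α) : (a - b).c2 = a.c2 - b.c2 := by simp [sub_eq_add_neg]
@[simp] theorem sub_c3 (a b : GB k α) : (a - b).c3 = a.c3 - b.c3 := by simp [sub_eq_add_neg]
@[simp] theorem sub_c4 (a b : GB k α) : (a - b).c4 = a.c4 - b.c4 := by simp [sub_eq_add_neg]
@[simp] theorem sub_c5 (a b : GB k α) : (a - b).c5 = a.c5 - b.c5 := by simp [sub_eq_add_neg]
@[simp] theorem sub_c6 (a b : GB k α) : (a - b).c6 = a.c6 - b.c6 := by simp [sub_eq_add_neg]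
@[simp] theorem sub_c7 (a b : GB k α) : (a - b).c7 = a.c7 - b.c7 := by simp [sub_eq_add_neg]
@[simp] theorem sub_c8 (a b : GB k α) : (a - b).c8 = a.c8 - b.c8 := by simp [sub_eq_add_neg]
@[simp] theorem sub_c9 (a b : GB k α) : (a - b).c9 = a.c9 - b.c9 := by simp [sub_eq_add_neg]
@[simp] theorem sub_c10 (a b : GB k α) : (a - b).c10 = a.c10 - b.c10 := by
  simp [sub_eq_add_neg]
@[simp] theorem sub_c11 (a b : GB k α) : (a - b).c11 = a.c11 - b.c11 := by
  simp [sub_eq_add_neg]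

/-- The generators of the model. -/
def y : Fin 5 → GB k α :=
  ![⟨0, 1, 0, 0, 0, 0, 0, 0, 0, 0, 0, 0⟩, ⟨0, 0, 1, 0, 0, 0, 0, 0, 0, 0, 0, 0⟩,
    ⟨0, 0, 0, 1, 0, 0, 0, 0, 0, 0, 0, 0⟩, ⟨0, 0, 0, 0, 1, 0, 0, 0, 0, 0, 0, 0⟩,
    ⟨0, 0, 0, 0, 0, 1, 0, 0, 0, 0, 0, 0⟩]

theorem y0 : (y 0 : GB k α) = ⟨0, 1, 0, 0, 0, 0, 0, 0, 0, 0, 0, 0⟩ := rfl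
theorem y1 : (y 1 : GB k α) = ⟨0, 0, 1, 0, 0, 0, 0, 0, 0, 0, 0, 0⟩ := rfl
theorem y2 : (y 2 : GB k α) = ⟨0, 0, 0, 1, 0, 0, 0, 0, 0, 0, 0, 0⟩ := rfl
theorem y3 : (y 3 : GB k α) = ⟨0, 0, 0, 0, 1, 0, 0, 0, 0, 0, 0, 0⟩ := rfl
theorem y4 : (y 4 : GB k α) = ⟨0, 0, 0, 0, 0, 1, 0, 0, 0, 0, 0, 0⟩ := rfl

/-- The augmentation. -/
def eps : GB k α →+* k where
  toFun b := b.c0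
  map_one' := rfl
  map_zero' := rfl
  map_add' a b := rfl
  map_mul' a b := rfl

theorem pow_four {b : GB k α} (h : b.c0 = 0) : b ^ 4 = 0 := by
  have h2 : b ^ 4 = (b * b) * (b * b) := by ring
  rw [h2]
  ext <;> simp [h]

theorem isUnit_of {b : GB k α} (h : b.c0 ≠ 0) : IsUnit b := by
  have h1 : IsNilpotent (b - algebraMap k _ b.c0) := ⟨4, pow_four (by simp [algebraMap_eq])⟩
  have h2 : IsUnit (algebraMap k (GB k α) b.c0) := (isUnit_iff_ne_zero.2 h).map _
  have := IsNilpotent.isUnit_add_left_of_commute h1 h2 (Commute.all _ _)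
  simpa using this

theorem isUnit_iff {b : GB k α} : IsUnit b ↔ b.c0 ≠ 0 :=
  ⟨fun h => (h.map (eps : GB k α →+* k)).ne_zero, isUnit_of⟩

/-- Annihilator of `x_1`. -/
theorem ann0 {b : GB k α} (h : y 0 * b = 0) : ∃ c, b = y 0 * c := by
  rw [GB.ext_iff] at h
  simp [y0] at h
  obtain ⟨h0, h2, h3, h4, h5, h10⟩ := h
  refine ⟨⟨b.c1, 0, b.c6, b.c7, b.c8, b.c9, 0, 0, 0, 0, b.c11, 0⟩, ?_⟩
  ext <;> simp [y0, *]

/-- Annihilator of `x_2`. -/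
theorem ann1 (hα : α ≠ 0) {b : GB k α} (h : y 1 * b = 0) : ∃ c, b = y 1 * c := by
  rw [GB.ext_iff] at h
  simp [y1, hα] at h
  obtain ⟨h0, h2, h3, h4, h5, h10⟩ := h
  refine ⟨⟨b.c2, b.c6, 0, -α⁻¹ * b.c7, -b.c8, b.c10, 0, 0, 0, b.c11, 0, 0⟩, ?_⟩
  ext <;> simp [y1, *]

theorem nondeg {a : GB k α} (h : ∀ b, (b * a).c11 = 0) : a = 0 := by
  have e0 := h ⟨0, 0, 0, 0, 0, 0, 0, 0, 0, 0, 0, 1⟩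
  have e1 := h ⟨0, 0, 0, 0, 0, 0, 0, 0, 0, 0, 1, 0⟩
  have e2 := h ⟨0, 0, 0, 0, 0, 0, 0, 0, 0, 1, 0, 0⟩
  have e3 := h ⟨0, 0, 0, 0, 0, 0, 0, 1, 0, 0, 0, 0⟩
  have e4 := h ⟨0, 0, 0, 0, 0, 0, 0, 0, 1, 0, 0, 0⟩
  have e5 := h ⟨0, 0, 0, 0, 0, 0, 1, 0, 0, 0, 0, 0⟩
  have e6 := h ⟨0, 0, 0, 0, 0, 1, 0, 0, 0, 0, 0, 0⟩
  have e7 := h ⟨0, 0, 0, 1, 0, 0, 0, 0, 0, 0, 0, 0⟩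
  have e8 := h ⟨0, 0, 0, 0, 1, 0, 0, 0, 0, 0, 0, 0⟩
  have e9 := h ⟨0, 0, 1, 0, 0, 0, 0, 0, 0, 0, 0, 0⟩
  have e10 := h ⟨0, 1, 0, 0, 0, 0, 0, 0, 0, 0, 0, 0⟩
  have e11 := h ⟨1, 0, 0, 0, 0, 0, 0, 0, 0, 0, 0, 0⟩
  simp at e0 e1 e2 e3 e4 e5 e6 e7 e8 e9 e10 e11
  ext <;> simp [*]

/-- coordinate functional of the socle -/
def lam : GB k α →ₗ[k] k where
  toFun b := b.c11
  map_add' a b := rfl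
  map_smul' c b := by simp [smul_eq]

end GB

section model

variable (k : Type u) [Field k] (α : k)

/-- The algebra map from the Gasharov–Peeva algebra to the model. -/
noncomputable def toGB : gasharovRing k α →ₐ[k] GB k α :=
  Ideal.Quotient.liftₐ (gasharovIdeal k α) (MvPolynomial.aeval GB.y) (by
    intro a ha
    have : gasharovIdeal k α ≤ RingHom.ker (MvPolynomial.aeval (R := k) (GB.y (α := α))) := by
      rw [gasharovIdeal, Ideal.span_le]
      intro p hp
      simp only [Set.mem_insert_iff, Set.mem_singleton_iff] at hp
      simp only [SetLike.mem_coe, RingHom.mem_ker]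
      rcases hp with rfl | rfl | rfl | rfl | rfl | rfl | rfl | rfl | rfl | rfl <;>
      · simp only [map_add, map_sub, map_mul, map_pow, MvPolynomial.aeval_X,
          MvPolynomial.aeval_C, pow_two]
        ext <;> simp [GB.y0, GB.y1, GB.y2, GB.y3, GB.y4, GB.algebraMap_eq]
    exact this ha)

@[simp] theorem toGB_gx (i : Fin 5) : toGB k α (gx k α i) = GB.y i := by
  simp only [toGB, gx]
  erw [Ideal.Quotient.liftₐ_apply, Ideal.Quotient.lift_mk]
  simp

theorem gx_rel {p : MvPolynomial (Fin 5) k} (hp : p ∈ gasharovIdeal k α) :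
    Ideal.Quotient.mk (gasharovIdeal k α) p = 0 := Ideal.Quotient.eq_zero_iff_mem.2 hp

theorem gas_smul (c : k) (a : gasharovRing k α) :
    c • a = algebraMap k (gasharovRing k α) c * a := Algebra.smul_def c a

/-- The linear map from the model to the algebra. -/
noncomputable def ofGB : GB k α →ₗ[k] gasharovRing k α where
  toFun b := b.c0 • 1 + b.c1 • gx k α 0 + b.c2 • gx k α 1 + b.c3 • gx k α 2 + b.c4 • gx k α 3
    + b.c5 • gx k α 4 + b.c6 • (gx k α 0 * gx k α 1) + b.c7 • (gx k α 0 * gx k α 2)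
    + b.c8 • (gx k α 0 * gx k α 3) + b.c9 • (gx k α 0 * gx k α 4)
    + b.c10 • (gx k α 1 * gx k α 4) + b.c11 • (gx k α 0 * gx k α 1 * gx k α 4)
  map_add' a b := by
    simp only [GB.add_c0, GB.add_c1, GB.add_c2, GB.add_c3, GB.add_c4, GB.add_c5, GB.add_c6,
      GB.add_c7, GB.add_c8, GB.add_c9, GB.add_c10, GB.add_c11]
    module
  map_smul' c b := by
    simp [GB.smul_eq]
    module

theorem toGB_ofGB (b : GB k α) : toGB k α (ofGB k α b) = b := by
  simp only [ofGB, LinearMap.coe_mk, AddHom.coe_mk, map_add, map_smul, map_mul, map_one, toGB_gx]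
  ext <;> simp [GB.smul_eq, GB.y0, GB.y1, GB.y2, GB.y3, GB.y4]

theorem ofGB_mul (b : GB k α) (i : Fin 5) :
    ofGB k α b * gx k α i = ofGB k α (b * GB.y i) := by
  have r1 : gx k α 0 ^ 2 = 0 := by
    have h := gx_rel k α (p := MvPolynomial.X 0 ^ 2)
      (Ideal.subset_span (by simp))
    simp only [map_add, map_sub, map_mul, map_pow] at h
    exact h
  have r2 : gx k α 1 ^ 2 = 0 := by
    have h := gx_rel k α (p := MvPolynomial.X 1 ^ 2)
      (Ideal.subset_span (by simp))
    simp only [map_add, map_sub, map_mul, map_pow] at h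
    exact h
  have r3 : gx k α 4 ^ 2 = 0 := by
    have h := gx_rel k α (p := MvPolynomial.X 4 ^ 2)
      (Ideal.subset_span (by simp))
    simp only [map_add, map_sub, map_mul, map_pow] at h
    exact h
  have r4 : gx k α 2 * gx k α 3 = 0 := by
    have h := gx_rel k α (p := MvPolynomial.X 2 * MvPolynomial.X 3)
      (Ideal.subset_span (by simp))
    simp only [map_add, map_sub, map_mul, map_pow] at h
    exact h
  have r5 : gx k α 2 * gx k α 4 = 0 := by
    have h := gx_rel k α (p := MvPolynomial.X 2 * MvPolynomial.X 4)
      (Ideal.subset_span (by simp))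
    simp only [map_add, map_sub, map_mul, map_pow] at h
    exact h
  have r6 : gx k α 3 * gx k α 4 = 0 := by
    have h := gx_rel k α (p := MvPolynomial.X 3 * MvPolynomial.X 4)
      (Ideal.subset_span (by simp))
    simp only [map_add, map_sub, map_mul, map_pow] at h
    exact h
  have r7 : gx k α 0 * gx k α 3 + gx k α 1 * gx k α 3 = 0 := by
    have h := gx_rel k α (p := MvPolynomial.X 0 * MvPolynomial.X 3 + MvPolynomial.X 1 * MvPolynomial.X 3)
      (Ideal.subset_span (by simp))
    simp only [map_add, map_sub, map_mul, map_pow] at h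
    exact h
  have r8 : algebraMap k _ α * (gx k α 0 * gx k α 2) + gx k α 1 * gx k α 2 = 0 := by
    have h := gx_rel k α (p := MvPolynomial.C α * (MvPolynomial.X 0 * MvPolynomial.X 2)
        + MvPolynomial.X 1 * MvPolynomial.X 2)
      (Ideal.subset_span (by simp))
    simp only [map_add, map_sub, map_mul, map_pow] at h
    exact h
  have r9 : gx k α 2 ^ 2 - gx k α 1 * gx k α 4
      + algebraMap k _ α * (gx k α 0 * gx k α 4) = 0 := by
    have h := gx_rel k α (p := MvPolynomial.X 2 ^ 2 - MvPolynomial.X 1 * MvPolynomial.X 4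
        + MvPolynomial.C α * (MvPolynomial.X 0 * MvPolynomial.X 4))
      (Ideal.subset_span (by simp))
    simp only [map_add, map_sub, map_mul, map_pow] at h
    exact h
  have r10 : gx k α 3 ^ 2 - gx k α 1 * gx k α 4 + gx k α 0 * gx k α 4 = 0 := by
    have h := gx_rel k α (p := MvPolynomial.X 3 ^ 2 - MvPolynomial.X 1 * MvPolynomial.X 4
        + MvPolynomial.X 0 * MvPolynomial.X 4)
      (Ideal.subset_span (by simp))
    simp only [map_add, map_sub, map_mul, map_pow] at h
    exact h
  set f := algebraMap k (gasharovRing k α) with hf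
  fin_cases i
  · change ofGB k α b * gx k α 0 = ofGB k α (b * GB.y 0)
    simp only [ofGB, LinearMap.coe_mk, AddHom.coe_mk, gas_smul, ← hf]
    simp [GB.y0]
    linear_combination (f b.c1 + f b.c6 * gx k α 1 + f b.c7 * gx k α 2 + f b.c8 * gx k α 3 + f b.c9 * gx k α 4
      + f b.c11 * gx k α 1 * gx k α 4) * r1
  · change ofGB k α b * gx k α 1 = ofGB k α (b * GB.y 1)
    simp only [ofGB, LinearMap.coe_mk, AddHom.coe_mk, gas_smul, ← hf]
    simp [GB.y1]
    linear_combination f b.c2 * r2 + f b.c3 * r8 + f b.c4 * r7 + f b.c6 * gx k α 0 * r2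
      + f b.c7 * (gx k α 0 * r8 - f α * gx k α 2 * r1) + f b.c8 * (gx k α 0 * r7 - gx k α 3 * r1) + f b.c10 * gx k α 4 * r2
      + f b.c11 * gx k α 0 * gx k α 4 * r2
  · change ofGB k α b * gx k α 2 = ofGB k α (b * GB.y 2)
    simp only [ofGB, LinearMap.coe_mk, AddHom.coe_mk, gas_smul, ← hf]
    simp [GB.y2]
    linear_combination f b.c2 * r8 + f b.c3 * r9 + f b.c4 * r4 + f b.c5 * r5
      + f b.c6 * (gx k α 0 * r8 - f α * gx k α 2 * r1) + f b.c7 * (gx k α 0 * r9 - f α * gx k α 4 * r1)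
      + f b.c8 * gx k α 0 * r4 + f b.c9 * gx k α 0 * r5 + f b.c10 * gx k α 1 * r5 + f b.c11 * gx k α 0 * gx k α 1 * r5
  · change ofGB k α b * gx k α 3 = ofGB k α (b * GB.y 3)
    simp only [ofGB, LinearMap.coe_mk, AddHom.coe_mk, gas_smul, ← hf]
    simp [GB.y3]
    linear_combination f b.c2 * r7 + f b.c3 * r4 + f b.c4 * r10 + f b.c5 * r6
      + f b.c6 * (gx k α 0 * r7 - gx k α 3 * r1) + f b.c7 * gx k α 0 * r4 + f b.c8 * (gx k α 0 * r10 - gx k α 4 * r1)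
      + f b.c9 * gx k α 0 * r6 + f b.c10 * gx k α 1 * r6 + f b.c11 * gx k α 0 * gx k α 1 * r6
  · change ofGB k α b * gx k α 4 = ofGB k α (b * GB.y 4)
    simp only [ofGB, LinearMap.coe_mk, AddHom.coe_mk, gas_smul, ← hf]
    simp [GB.y4]
    linear_combination f b.c3 * r5 + f b.c4 * r6 + f b.c5 * r3 + f b.c7 * gx k α 0 * r5
      + f b.c8 * gx k α 0 * r6 + f b.c9 * gx k α 0 * r3 + f b.c10 * gx k α 1 * r3 + f b.c11 * gx k α 0 * gx k α 1 * r3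

theorem ofGB_surjective : Function.Surjective (ofGB k α) := by
  intro a
  obtain ⟨p, rfl⟩ := Ideal.Quotient.mk_surjective a
  induction p using MvPolynomial.induction_on with
  | C c =>
    refine ⟨algebraMap k _ c, ?_⟩
    simp [ofGB, GB.algebraMap_eq, gas_smul]
    rfl
  | add p q hp hq =>
    obtain ⟨a, ha⟩ := hp
    obtain ⟨b, hb⟩ := hq
    exact ⟨a + b, by rw [map_add, map_add, ha, hb]⟩
  | mul_X p i hp =>
    obtain ⟨a, ha⟩ := hp
    exact ⟨a * GB.y i, by rw [← ofGB_mul, map_mul, ha]; rfl⟩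

theorem toGB_bijective : Function.Bijective (toGB k α) := by
  refine ⟨fun a b h => ?_, fun b => ⟨_, toGB_ofGB k α b⟩⟩
  obtain ⟨a, rfl⟩ := ofGB_surjective k α a
  obtain ⟨b, rfl⟩ := ofGB_surjective k α b
  rw [toGB_ofGB, toGB_ofGB] at h
  rw [h]

/-- The isomorphism of the algebra with the model. -/
noncomputable def gbEquiv : gasharovRing k α ≃ₐ[k] GB k α :=
  AlgEquiv.ofBijective (toGB k α) (toGB_bijective k α)

@[simp] theorem gbEquiv_gx (i : Fin 5) : gbEquiv k α (gx k α i) = GB.y i := toGB_gx k α i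

theorem gas_finite : Module.Finite k (gasharovRing k α) := by
  have : Submodule.span k {(1 : gasharovRing k α), gx k α 0, gx k α 1, gx k α 2, gx k α 3,
      gx k α 4, gx k α 0 * gx k α 1, gx k α 0 * gx k α 2, gx k α 0 * gx k α 3,
      gx k α 0 * gx k α 4, gx k α 1 * gx k α 4, gx k α 0 * gx k α 1 * gx k α 4} = ⊤ := by
    rw [eq_top_iff]
    rintro a -
    obtain ⟨b, rfl⟩ := ofGB_surjective k α a
    simp only [ofGB, LinearMap.coe_mk, AddHom.coe_mk]
    refine add_mem (add_mem (add_mem (add_mem (add_mem (add_mem (add_mem (add_mem (add_mem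
      (add_mem (add_mem ?_ ?_) ?_) ?_) ?_) ?_) ?_) ?_) ?_) ?_) ?_) ?_ <;>
    exact Submodule.smul_mem _ _ (Submodule.subset_span (by simp))
  exact ⟨this ▸ Submodule.fg_span (Set.toFinite _)⟩

theorem gas_isUnit {a : gasharovRing k α} : IsUnit a ↔ (gbEquiv k α a).c0 ≠ 0 := by
  rw [← GB.isUnit_iff, MulEquiv.isUnit_map]

theorem gas_local : IsLocalRing (gasharovRing k α) := by
  have : Nontrivial (gasharovRing k α) := by
    refine ⟨0, 1, fun h => ?_⟩
    have := congrArg (fun a => (gbEquiv k α a).c0) h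
    simp at this
  refine IsLocalRing.of_isUnit_or_isUnit_one_sub_self fun a => ?_
  rw [gas_isUnit, gas_isUnit]
  by_cases h : (gbEquiv k α a).c0 = 0
  · right
    simp [h]
  · exact Or.inl h

theorem mem_max [IsLocalRing (gasharovRing k α)] {a : gasharovRing k α} :
    a ∈ maximalIdeal (gasharovRing k α) ↔ (gbEquiv k α a).c0 = 0 := by
  rw [IsLocalRing.mem_maximalIdeal, mem_nonunits_iff, gas_isUnit, not_not]

theorem gas_injective : Module.Injective (gasharovRing k α) (gasharovRing k α) := by
  have := gas_finite k α
  apply Module.Baer.injective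
  intro I g
  let lam : gasharovRing k α →ₗ[k] k := GB.lam.comp (gbEquiv k α).toLinearMap
  let T : gasharovRing k α →ₗ[k] Module.Dual k (gasharovRing k α) :=
    LinearMap.mk₂ k (fun a b => lam (a * b)) (by intros; simp [add_mul])
      (by intros; rw [smul_mul_assoc, map_smul]) (by intros; simp [mul_add])
      (by intros; rw [mul_smul_comm, map_smul])
  have nd : ∀ a, (∀ b, lam (b * a) = 0) → a = 0 := by
    intro a h
    apply (gbEquiv k α).injective
    rw [map_zero]
    apply GB.nondeg
    intro b
    have := h ((gbEquiv k α).symm b)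
    simpa [lam, GB.lam] using this
  have Tinj : Function.Injective T := by
    rw [← LinearMap.ker_eq_bot, LinearMap.ker_eq_bot']
    intro a ha
    apply nd
    intro b
    have := LinearMap.congr_fun ha b
    rw [mul_comm]
    simpa [T] using this
  have Tsurj : Function.Surjective T :=
    (LinearMap.injective_iff_surjective_of_finrank_eq_finrank
      (Subspace.dual_finrank_eq).symm).1 Tinj
  let p : Submodule k (gasharovRing k α) := I.restrictScalars k
  let g' : p →ₗ[k] k := lam.comp (g.restrictScalars k)
  obtain ⟨G, hG⟩ := LinearMap.exists_extend g'
  obtain ⟨c, rfl⟩ := Tsurj G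
  refine ⟨LinearMap.mulLeft _ c, ?_⟩
  intro x hx
  have key : ∀ z (hz : z ∈ I), lam (c * z) = lam (g ⟨z, hz⟩) := fun z hz =>
    LinearMap.congr_fun hG (⟨z, hz⟩ : p)
  rw [LinearMap.mulLeft_apply, ← sub_eq_zero]
  apply nd
  intro b
  have h1 := key (b * x) (I.mul_mem_left b hx)
  have h2 : g ⟨b * x, I.mul_mem_left b hx⟩ = b * g ⟨x, hx⟩ := by
    rw [← smul_eq_mul b (g _), ← map_smul]; rfl
  rw [h2] at h1
  rw [mul_sub, map_sub, ← h1, sub_eq_zero]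
  congr 1
  ring

theorem gasharovD_apply (n : ℤ) (v : Fin 2 → gasharovRing k α) :
    gasharovD k α n v = ![gx k α 0 * v 0
      + (algebraMap k (gasharovRing k α) (α ^ n) * gx k α 2 + gx k α 3) * v 1,
      gx k α 1 * v 1] := by
  ext i
  fin_cases i <;> simp [gasharovD, Matrix.toLin'_apply, Matrix.mulVec, dotProduct, Fin.sum_univ_two]

theorem gas_exact (hα : α ≠ 0) (n : ℤ) :
    Function.Exact (gasharovD k α (n + 1)) (gasharovD k α n) := by
  have hr : gx k α 0 * (algebraMap k (gasharovRing k α) (α ^ (n + 1)) * gx k α 2 + gx k α 3)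
      + (algebraMap k (gasharovRing k α) (α ^ n) * gx k α 2 + gx k α 3) * gx k α 1 = 0 := by
    apply (gbEquiv k α).injective
    simp only [map_add, map_mul, gbEquiv_gx, AlgEquiv.commutes, map_zero]
    ext <;> simp [GB.y0, GB.y1, GB.y2, GB.y3, GB.algebraMap_eq, zpow_add_one₀ hα]
    ring
  have h00 : gx k α 0 * gx k α 0 = 0 := by
    apply (gbEquiv k α).injective
    simp only [map_mul, gbEquiv_gx, map_zero]
    ext <;> simp [GB.y0]
  have h11 : gx k α 1 * gx k α 1 = 0 := by
    apply (gbEquiv k α).injective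
    simp only [map_mul, gbEquiv_gx, map_zero]
    ext <;> simp [GB.y1]
  have a0 : ∀ b, gx k α 0 * b = 0 → ∃ c, b = gx k α 0 * c := by
    intro b hb
    have := congrArg (gbEquiv k α) hb
    rw [map_mul, map_zero, gbEquiv_gx] at this
    obtain ⟨c, hc⟩ := GB.ann0 this
    exact ⟨(gbEquiv k α).symm c, (gbEquiv k α).injective (by simp [hc])⟩
  have a1 : ∀ b, gx k α 1 * b = 0 → ∃ c, b = gx k α 1 * c := by
    intro b hb
    have := congrArg (gbEquiv k α) hb
    rw [map_mul, map_zero, gbEquiv_gx] at this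
    obtain ⟨c, hc⟩ := GB.ann1 hα this
    exact ⟨(gbEquiv k α).symm c, (gbEquiv k α).injective (by simp [hc])⟩
  intro v
  constructor
  · intro h
    rw [gasharovD_apply] at h
    have e0 := congrFun h 0
    have e1 := congrFun h 1
    simp only [Matrix.cons_val_zero, Matrix.cons_val_one, Pi.zero_apply] at e0 e1
    obtain ⟨w, hw⟩ := a1 _ e1
    rw [hw] at e0
    obtain ⟨z, hz⟩ := a0 (v 0 - (algebraMap k (gasharovRing k α) (α ^ (n + 1)) * gx k α 2
      + gx k α 3) * w) (by linear_combination e0 - w * hr)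
    refine ⟨![z, w], ?_⟩
    rw [gasharovD_apply]
    ext i
    fin_cases i
    · simp; linear_combination -hz
    · simp [hw]
  · rintro ⟨w, rfl⟩
    rw [gasharovD_apply, gasharovD_apply]
    ext i
    fin_cases i
    · simp; linear_combination w 0 * h00 + w 1 * hr
    · simp; linear_combination w 1 * h11

end model

end ComplexityTest

namespace ComplexityTest

section general

variable {A : Type u} [CommRing A] [IsLocalRing A]

theorem gen_mem_smul_top {r : ℕ} {x : Fin r → A} (h : ∀ i, x i ∈ maximalIdeal A) :
    x ∈ maximalIdeal A • (⊤ : Submodule A (Fin r → A)) := by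
  have : x = ∑ i, x i • (Pi.single i 1 : Fin r → A) := by
    ext j
    simp [Finset.sum_apply, Pi.single_apply]
  rw [this]
  exact Submodule.sum_mem _ fun i _ => Submodule.smul_mem_smul (h i) trivial

theorem gen_surj {r : ℕ} {P : Type*} [AddCommGroup P] [Module A P] (f : P →ₗ[A] (Fin r → A))
    (h : ∀ y, ∃ x, ∀ i, (y - f x) i ∈ maximalIdeal A) : Function.Surjective f := by
  rw [← LinearMap.range_eq_top, eq_top_iff]
  apply Submodule.le_of_le_smul_of_le_jacobson_bot (I := maximalIdeal A)
    Module.Finite.fg_top (IsLocalRing.maximalIdeal_le_jacobson _)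
  intro y _
  obtain ⟨x, hx⟩ := h y
  rw [← add_sub_cancel (f x) y]
  exact Submodule.add_mem_sup ⟨x, rfl⟩ (gen_mem_smul_top hx)

/-- lifting of a map of modules to a surjection on a minimal cover -/
theorem gen_lift {r b : ℕ} {N : Type*} [AddCommGroup N] [Module A N]
    (f : (Fin r → A) →ₗ[A] N) (g : (Fin b → A) →ₗ[A] N)
    (hf : Function.Surjective f) (hg : Function.Surjective g)
    (hk : ∀ x, g x = 0 → ∀ i, x i ∈ maximalIdeal A) :
    ∃ φ : (Fin r → A) →ₗ[A] (Fin b → A), g ∘ₗ φ = f ∧ Function.Surjective φ := by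
  obtain ⟨φ, hφ⟩ := Module.projective_lifting_property g f hg
  refine ⟨φ, hφ, gen_surj φ fun y => ?_⟩
  obtain ⟨x, hx⟩ := hf (g y)
  refine ⟨x, hk _ ?_⟩
  rw [map_sub, sub_eq_zero, ← hx, ← hφ]
  rfl

/-- uniqueness of minimal covers -/
theorem gen_min {r b : ℕ} {N : Type*} [AddCommGroup N] [Module A N]
    (f : (Fin r → A) →ₗ[A] N) (g : (Fin b → A) →ₗ[A] N)
    (hf : Function.Surjective f) (hg : Function.Surjective g)
    (hkf : ∀ x, f x = 0 → ∀ i, x i ∈ maximalIdeal A)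
    (hkg : ∀ x, g x = 0 → ∀ i, x i ∈ maximalIdeal A) :
    ∃ φ : (Fin r → A) →ₗ[A] (Fin b → A), g ∘ₗ φ = f ∧ Function.Bijective φ := by
  obtain ⟨φ, hφ, hφs⟩ := gen_lift f g hf hg hkg
  obtain ⟨ψ, hψ, hψs⟩ := gen_lift g f hg hf hkf
  have := OrzechProperty.injective_of_surjective_endomorphism (ψ ∘ₗ φ) (hψs.comp hφs)
  exact ⟨φ, hφ, Function.Injective.of_comp (f := ψ) this, hφs⟩

/-- isomorphism of kernels -/
theorem gen_ker {r b : ℕ} {N : Type*} [AddCommGroup N] [Module A N]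
    (f : (Fin r → A) →ₗ[A] N) (g : (Fin b → A) →ₗ[A] N)
    (φ : (Fin r → A) →ₗ[A] (Fin b → A)) (h : g ∘ₗ φ = f) (hb : Function.Bijective φ) :
    Nonempty (LinearMap.ker f ≃ₗ[A] LinearMap.ker g) := by
  refine ⟨(LinearEquiv.ofBijective φ hb).ofSubmodules _ _ ?_⟩
  subst h
  ext x
  simp only [Submodule.mem_map, LinearMap.mem_ker, LinearMap.comp_apply]
  constructor
  · rintro ⟨y, hy, rfl⟩
    exact hy
  · intro hx
    obtain ⟨y, rfl⟩ := hb.2 x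
    exact ⟨y, hx, rfl⟩

/-- Modules of complexity zero over a ring with nonzero socle are free. -/
theorem gen_free {s : A} (hs : s ≠ 0) (hsm : ∀ a ∈ maximalIdeal A, s * a = 0)
    {K : Type u} [AddCommGroup K] [Module A K] (h : HasComplexityLE A K 0) :
    ∃ r : ℕ, Nonempty ((Fin r → A) ≃ₗ[A] K) := by
  obtain ⟨R, a, hR⟩ := h
  have h1 : ∃ N, R.b (N + 1) = 0 := by
    have h2 : Tendsto (fun n : ℕ => a * (n : ℝ) ^ (((0 : ℕ) : ℤ) - 1)) atTop (nhds 0) := by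
      have := (tendsto_inv_atTop_nhds_zero_nat (𝕜 := ℝ)).const_mul a
      simpa using this
    have h3 := h2.eventually (gt_mem_nhds (zero_lt_one (α := ℝ)))
    obtain ⟨N, hN⟩ := ((hR.and h3).and (eventually_ge_atTop 1)).exists
    obtain ⟨⟨h4, h5⟩, h6⟩ := hN
    obtain ⟨N, rfl⟩ := Nat.exists_eq_add_of_le' h6
    refine ⟨N, ?_⟩
    have : (R.b (N + 1) : ℝ) < 1 := lt_of_le_of_lt h4 h5
    have : R.b (N + 1) < 1 := by exact_mod_cast this
    omega
  have step : ∀ n, R.b (n + 2) = 0 → R.b (n + 1) = 0 := by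
    intro n hn
    by_contra hne
    have i : Fin (R.b (n + 1)) := ⟨0, Nat.pos_of_ne_zero hne⟩
    have hz : R.d n (Pi.single i s) = 0 := by
      have : (Pi.single i s : Fin (R.b (n + 1)) → A) = s • Pi.single i 1 := by
        rw [← Pi.single_smul]; simp
      rw [this, map_smul]
      ext j
      exact hsm _ (R.minimal n _ j)
    obtain ⟨y, hy⟩ := (R.exact_succ n _).1 hz
    have hy0 : y = 0 := by
      ext j
      have hn' : R.b (n + 1 + 1) = 0 := hn
      exact absurd j.2 (by omega)
    rw [hy0, map_zero] at hy
    have := congrFun hy i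
    simp at this
    exact hs this.symm
  have h0 : R.b 1 = 0 := by
    obtain ⟨N, hN⟩ := h1
    induction N with
    | zero => exact hN
    | succ N ih => exact ih (step N hN)
  refine ⟨R.b 0, ⟨LinearEquiv.ofBijective R.aug ⟨?_, R.aug_surjective⟩⟩⟩
  rw [← LinearMap.ker_eq_bot, LinearMap.ker_eq_bot']
  intro x hx
  obtain ⟨y, hy⟩ := (R.exact_zero x).1 hx
  have hy0 : y = 0 := by
    ext j
    have h0' : R.b (0 + 1) = 0 := h0
    exact absurd j.2 (by omega)
  rw [← hy, hy0, map_zero]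

theorem gen_le_of_cx_zero {K : Type u} [AddCommGroup K] [Module A K]
    (h : complexity A K = 0) : HasComplexityLE A K 0 := by
  have hne : {c : ℕ∞ | ∃ t : ℕ, c = t ∧ HasComplexityLE A K t}.Nonempty := by
    by_contra hc
    rw [Set.not_nonempty_iff_eq_empty] at hc
    rw [complexity, hc, sInf_empty] at h
    exact absurd h (by simp)
  have := csInf_mem hne
  obtain ⟨t, ht, ht'⟩ := this
  have h' : (t : ℕ∞) = 0 := by rw [← ht]; exact h
  have h'' : t = 0 := by exact_mod_cast h'
  exact h'' ▸ ht'

theorem gen_cx_of_pd {K : Type u} [AddCommGroup K] [Module A K]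
    (h : HasFiniteProjDim A K) : complexity A K = 0 := by
  obtain ⟨t, R, hR⟩ := h
  refine le_antisymm (sInf_le ⟨0, by simp, R, 0, ?_⟩) bot_le
  filter_upwards [eventually_gt_atTop t] with n hn
  simp [hR n hn]

/-- Extracting data from reducible complexity. -/
theorem gen_redcx {s : A} (hs : s ≠ 0) (hsm : ∀ a ∈ maximalIdeal A, s * a = 0)
    {N : ModuleCat.{u} A} (h : HasRedCxCat N) (h1 : complexity A N = 1) :
    ∃ (S : ModuleCat.{u} A) (n r : ℕ) (f : N →ₗ[A] (Fin r → A)) (g : (Fin r → A) →ₗ[A] S),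
      IsSyzygyOf A N S n ∧ Function.Injective f ∧ Function.Exact f g ∧ Function.Surjective g := by
  cases h with
  | of_finite_projDim _ hfg h =>
    rw [gen_cx_of_pd h] at h1
    exact absurd h1 (by simp)
  | step _ K S n hfg hKfg hpos hfin hsyz f g hses hcx hdepth hK =>
    rw [h1] at hcx
    obtain ⟨r, ⟨e⟩⟩ := gen_free hs hsm (gen_le_of_cx_zero (hcx.trans (by simp)))
    obtain ⟨hf, hfg, hg⟩ := hses
    refine ⟨S, n, r, e.symm.toLinearMap ∘ₗ f, g ∘ₗ e.toLinearMap, hsyz,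
      e.symm.injective.comp hf, ?_, hg.comp e.surjective⟩
    intro x
    rw [LinearMap.comp_apply]
    constructor
    · intro hx
      obtain ⟨y, hy⟩ := (hfg _).1 hx
      exact ⟨y, by simp [hy]⟩
    · rintro ⟨y, rfl⟩
      simpa using (hfg _).2 ⟨y, rfl⟩

/-- A surjection onto a free module from a free module is bijective if its kernel is
annihilated by the socle element `s`. -/
theorem gen_bij {s : A} (hs' : ∀ a, s * a = 0 → a ∈ maximalIdeal A) {r b : ℕ}
    (φ : (Fin r → A) →ₗ[A] (Fin b → A)) (hφ : Function.Surjective φ)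
    (hk : ∀ x, φ x = 0 → s • x = 0) : Function.Bijective φ := by
  obtain ⟨σ, hσ⟩ := Module.projective_lifting_property φ LinearMap.id hφ
  have hσ' : ∀ y, φ (σ y) = y := fun y => LinearMap.congr_fun hσ y
  have hσs : Function.Surjective σ := by
    apply gen_surj
    intro x
    refine ⟨φ x, fun i => hs' _ ?_⟩
    exact congrFun (hk (x - σ (φ x)) (by rw [map_sub, hσ', sub_self])) i
  refine ⟨fun x y h => ?_, hφ⟩
  obtain ⟨x, rfl⟩ := hσs x
  obtain ⟨y, rfl⟩ := hσs y
  rw [hσ', hσ'] at h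
  rw [h]

end general

section gas

variable {k : Type u} [Field k] {α : k}

/-- The socle generator. -/
noncomputable def gs (k : Type u) [Field k] (α : k) : gasharovRing k α :=
  (gbEquiv k α).symm ⟨0, 0, 0, 0, 0, 0, 0, 0, 0, 0, 0, 1⟩

theorem gs_ne : gs k α ≠ 0 := by
  intro h
  have := congrArg (fun a => (gbEquiv k α a).c11) h
  simp [gs] at this

theorem gs_mul [IsLocalRing (gasharovRing k α)] (a : gasharovRing k α) :
    gs k α * a = 0 ↔ a ∈ maximalIdeal (gasharovRing k α) := by
  rw [mem_max, ← (gbEquiv k α).injective.eq_iff, map_mul, map_zero, GB.ext_iff]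
  simp [gs]

theorem gasD_mem [IsLocalRing (gasharovRing k α)] (n : ℤ) (v : Fin 2 → gasharovRing k α)
    (i : Fin 2) : gasharovD k α n v i ∈ maximalIdeal (gasharovRing k α) := by
  rw [gasharovD_apply, mem_max]
  fin_cases i
  · simp [GB.y0, GB.y2, GB.y3]
  · simp [GB.y1]

theorem gas_ker_mem [IsLocalRing (gasharovRing k α)] (hα : α ≠ 0) (n : ℤ)
    (v : Fin 2 → gasharovRing k α) (hv : gasharovD k α n v = 0) (i : Fin 2) :
    v i ∈ maximalIdeal (gasharovRing k α) := by
  obtain ⟨w, rfl⟩ := (gas_exact k α hα n v).1 hv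
  exact gasD_mem _ _ _

/-- The standard resolution. -/
noncomputable def gasRes [IsLocalRing (gasharovRing k α)] (hα : α ≠ 0) :
    MinFreeRes (gasharovRing k α) ↥(LinearMap.range (gasharovD k α 0)) where
  b _ := 2
  d n := gasharovD k α (n + 1)
  aug := (gasharovD k α 0).rangeRestrict
  aug_surjective := LinearMap.surjective_rangeRestrict _
  exact_zero v := by
    have := gas_exact k α hα 0 v
    rw [← Subtype.coe_inj]
    simpa using this
  exact_succ n := by
    have := gas_exact k α hα (n + 1)
    simpa using this
  minimal n x i := gasD_mem _ _ _

theorem gas_cx [IsLocalRing (gasharovRing k α)] (hα : α ≠ 0) :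
    complexity (gasharovRing k α) ↥(LinearMap.range (gasharovD k α 0)) = 1 := by
  apply le_antisymm
  · refine sInf_le ⟨1, by simp, gasRes hα, 2, ?_⟩
    filter_upwards with n
    simp [gasRes]
  · rw [Order.one_le_iff_ne_zero]
    intro h
    obtain ⟨r, ⟨e⟩⟩ := gen_free gs_ne (fun a ha => (gs_mul a).2 ha) (gen_le_of_cx_zero h)
    have hsM : ∀ x : LinearMap.range (gasharovD k α 0), gs k α • x = 0 := by
      rintro ⟨_, v, rfl⟩
      ext i
      exact (gs_mul _).2 (gasD_mem 0 v i)
    have hx : gasharovD k α 0 (Pi.single 0 1) ≠ 0 := by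
      intro h
      have := congrArg (fun a => (gbEquiv k α (a 0)).c1) h
      simp [gasharovD_apply, GB.y0] at this
    apply hx
    have h0 : ∀ z : Fin r → gasharovRing k α, gs k α • z = 0 := by
      intro z
      apply e.injective
      rw [map_smul, hsM, map_zero]
    have hr : ∀ i : Fin r, False := by
      intro i
      have := congrFun (h0 (Pi.single i 1)) i
      simp at this
      exact gs_ne this
    have h1 : (⟨_, LinearMap.mem_range_self _ (Pi.single 0 1)⟩ :
        LinearMap.range (gasharovD k α 0)) = 0 := by
      rw [← e.apply_symm_apply ⟨_, LinearMap.mem_range_self _ (Pi.single 0 1)⟩,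
        ← e.map_zero]
      congr 1
      ext i
      exact (hr i).elim
    exact congrArg Subtype.val h1

theorem gas_range_ker (hα : α ≠ 0) (n : ℤ) :
    LinearMap.range (gasharovD k α (n + 1)) = LinearMap.ker (gasharovD k α n) := by
  ext v
  exact ((gas_exact k α hα n) v).symm

/-- one syzygy step -/
theorem gas_step [IsLocalRing (gasharovRing k α)] (hα : α ≠ 0) (n : ℤ) {r : ℕ}
    {N : Type u} [AddCommGroup N] [Module (gasharovRing k α) N]
    (f : (Fin r → gasharovRing k α) →ₗ[gasharovRing k α] N) (hf : Function.Surjective f)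
    (hkf : ∀ x, f x = 0 → ∀ i, x i ∈ maximalIdeal (gasharovRing k α))
    (e : N ≃ₗ[gasharovRing k α] LinearMap.range (gasharovD k α n)) :
    Nonempty (LinearMap.ker f ≃ₗ[gasharovRing k α] LinearMap.range (gasharovD k α (n + 1))) := by
  obtain ⟨φ, hφ, hb⟩ := gen_min (e.toLinearMap ∘ₗ f) (gasharovD k α n).rangeRestrict
    (e.surjective.comp hf) (LinearMap.surjective_rangeRestrict _)
    (fun x hx => hkf x (e.injective (by simpa using hx)))
    (fun x hx => gas_ker_mem hα n x (congrArg Subtype.val hx))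
  have h1 := gen_ker _ _ φ hφ hb
  rw [LinearMap.ker_rangeRestrict, ← gas_range_ker hα, LinearEquiv.ker_comp] at h1
  exact h1

theorem gas_syz [IsLocalRing (gasharovRing k α)] (hα : α ≠ 0)
    (R : MinFreeRes (gasharovRing k α) ↥(LinearMap.range (gasharovD k α 0))) :
    Nonempty (LinearMap.ker R.aug ≃ₗ[gasharovRing k α] LinearMap.range (gasharovD k α 1)) ∧
    ∀ n : ℕ, Nonempty (LinearMap.ker (R.d n) ≃ₗ[gasharovRing k α]
      LinearMap.range (gasharovD k α (n + 2 : ℕ))) := by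
  have h0 : Nonempty (LinearMap.ker R.aug ≃ₗ[gasharovRing k α]
      LinearMap.range (gasharovD k α 1)) := by
    refine gas_step hα 0 R.aug R.aug_surjective (fun x hx i => ?_) (LinearEquiv.refl _ _)
    obtain ⟨y, rfl⟩ := (R.exact_zero x).1 hx
    exact R.minimal _ _ _
  refine ⟨h0, fun n => ?_⟩
  have step : ∀ n : ℕ, Nonempty (LinearMap.range (R.d n) ≃ₗ[gasharovRing k α]
      LinearMap.range (gasharovD k α (n + 1 : ℕ))) → Nonempty (LinearMap.ker (R.d n)
      ≃ₗ[gasharovRing k α] LinearMap.range (gasharovD k α (n + 2 : ℕ))) := by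
    rintro n ⟨e⟩
    have := gas_step hα (n + 1 : ℕ) (R.d n).rangeRestrict (LinearMap.surjective_rangeRestrict _)
      (fun x hx i => by
        obtain ⟨y, rfl⟩ := (R.exact_succ n x).1 (congrArg Subtype.val hx)
        exact R.minimal _ _ _) e
    rw [LinearMap.ker_rangeRestrict] at this
    exact_mod_cast this
  apply step
  induction n with
  | zero =>
    have : LinearMap.range (R.d 0) = LinearMap.ker R.aug := by
      ext v
      exact (R.exact_zero v).symm
    rw [this]
    simpa using h0
  | succ n ih =>
    have : LinearMap.range (R.d (n + 1)) = LinearMap.ker (R.d n) := by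
      ext v
      exact (R.exact_succ n v).symm
    rw [this]
    exact step n ih

theorem gas_syz' [IsLocalRing (gasharovRing k α)] (hα : α ≠ 0) (n : ℕ)
    (S : Type u) [AddCommGroup S] [Module (gasharovRing k α) S]
    (h : IsSyzygyOf (gasharovRing k α) ↥(LinearMap.range (gasharovD k α 0)) S n) :
    Nonempty (S ≃ₗ[gasharovRing k α] LinearMap.range (gasharovD k α n)) := by
  match n, h with
  | 0, h => exact h
  | 1, ⟨R, ⟨e⟩⟩ =>
    obtain ⟨e'⟩ := (gas_syz hα R).1
    exact ⟨e.trans e'⟩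
  | (n + 2), ⟨R, ⟨e⟩⟩ =>
    obtain ⟨e'⟩ := (gas_syz hα R).2 n
    exact ⟨e.trans e'⟩

/-- The syzygies are pairwise nonisomorphic. -/
theorem gas_noniso [IsLocalRing (gasharovRing k α)] (hα : α ≠ 0) (m : ℕ) (hm : α ^ m ≠ 1)
    (e : LinearMap.range (gasharovD k α 0) ≃ₗ[gasharovRing k α]
      LinearMap.range (gasharovD k α m)) : False := by
  obtain ⟨φ, hφ, hs⟩ := gen_lift (e.toLinearMap ∘ₗ (gasharovD k α 0).rangeRestrict)
    (gasharovD k α m).rangeRestrict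
    (e.surjective.comp (LinearMap.surjective_rangeRestrict _))
    (LinearMap.surjective_rangeRestrict _)
    (fun x hx => gas_ker_mem hα m x (congrArg Subtype.val hx))
  have hker : gasharovD k α m (φ (gasharovD k α 1 (Pi.single 1 1))) = 0 := by
    have h1 := LinearMap.congr_fun hφ (gasharovD k α 1 (Pi.single 1 1))
    have h2 : (gasharovD k α 0).rangeRestrict (gasharovD k α 1 (Pi.single 1 1)) = 0 := by
      ext1
      exact (gas_exact k α hα 0 _).2 ⟨_, rfl⟩
    simp only [LinearMap.comp_apply, h2, map_zero] at h1
    exact congrArg Subtype.val h1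
  obtain ⟨q, hq⟩ := (gas_exact k α hα m _).1 hker
  have hD : gasharovD k α 1 (Pi.single 1 1) =
      (algebraMap k (gasharovRing k α) α * gx k α 2 + gx k α 3) • Pi.single 0 1
        + gx k α 1 • Pi.single 1 1 := by
    rw [gasharovD_apply]
    ext i
    fin_cases i <;> simp
  rw [hD, map_add, map_smul, map_smul, gasharovD_apply] at hq
  set p := φ (Pi.single 0 1) with hp
  have hpq : ∀ i, p i ∈ maximalIdeal (gasharovRing k α) := by
    have q0 := congrArg (fun v => gbEquiv k α (v 0)) hq
    have q1 := congrArg (fun v => gbEquiv k α (v 1)) hq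
    simp only [Matrix.cons_val_zero, Matrix.cons_val_one, Pi.add_apply, Pi.smul_apply,
      smul_eq_mul, map_add, map_mul, gbEquiv_gx, AlgEquiv.commutes] at q0 q1
    have c3 := congrArg GB.c3 q0
    have c4 := congrArg GB.c4 q0
    have d3 := congrArg GB.c3 q1
    simp [GB.y0, GB.y1, GB.y2, GB.y3, GB.algebraMap_eq] at c3 c4 d3
    intro i
    rw [mem_max]
    fin_cases i
    · rw [c4, zpow_add_one₀ hα, zpow_natCast] at c3
      have : α * (α ^ m - 1) * (gbEquiv k α (p 0)).c0 = 0 := by linear_combination c3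
      simpa [hα, sub_eq_zero, hm] using this
    · simpa [hα] using d3
  -- contradiction: `φ` is an isomorphism
  have hsurj : Function.Surjective (φ ∘ₗ LinearMap.toSpanSingleton (gasharovRing k α) _
      (Pi.single 1 1 : Fin 2 → gasharovRing k α)) := by
    apply gen_surj
    intro y
    obtain ⟨x, rfl⟩ := hs y
    refine ⟨x 1, fun i => ?_⟩
    have : x = x 0 • Pi.single 0 1 + x 1 • Pi.single 1 1 := by
      ext i
      fin_cases i <;> simp
    have h2 : φ x - (φ ∘ₗ LinearMap.toSpanSingleton (gasharovRing k α) _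
        (Pi.single 1 1 : Fin 2 → gasharovRing k α)) (x 1) = x 0 • p := by
      conv_lhs => enter [1]; rw [this]
      simp [hp]
    rw [h2]
    exact Ideal.mul_mem_left _ _ (hpq i)
  have : Nontrivial (gasharovRing k α) := inferInstance
  have h21 := le_of_fin_surjective (gasharovRing k α) (n := 1) (m := 2)
    ((φ ∘ₗ LinearMap.toSpanSingleton (gasharovRing k α) _
      (Pi.single 1 1 : Fin 2 → gasharovRing k α)) ∘ₗ LinearMap.proj 0)
    (hsurj.comp fun a => ⟨fun _ => a, rfl⟩)
  omega

theorem gas_main [IsLocalRing (gasharovRing k α)] (hα : α ≠ 0)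
    (hinf : ∀ m : ℕ, 0 < m → α ^ m ≠ 1) :
    ¬ HasRedCx (gasharovRing k α) ↥(LinearMap.range (gasharovD k α 0)) := by
  intro h
  obtain ⟨S, n, r, f, g, hsyz, hf, hfg, hg⟩ := gen_redcx gs_ne (fun a ha => (gs_mul a).2 ha) h
    (gas_cx hα)
  obtain ⟨e⟩ := gas_syz' hα n S hsyz
  obtain ⟨φ, hφ, hs⟩ := gen_lift (e.toLinearMap ∘ₗ g) (gasharovD k α n).rangeRestrict
    (e.surjective.comp hg) (LinearMap.surjective_rangeRestrict _)
    (fun x hx => gas_ker_mem hα n x (congrArg Subtype.val hx))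
  have hb : Function.Bijective φ := by
    refine gen_bij (s := gs k α) (fun a ha => (gs_mul a).1 ha) φ hs fun x hx => ?_
    have h1 : g x = 0 := by
      apply e.injective
      have := LinearMap.congr_fun hφ x
      simp only [LinearMap.comp_apply, hx, map_zero] at this
      rw [map_zero]
      exact this.symm
    obtain ⟨y, rfl⟩ := (hfg x).1 h1
    rw [← map_smul]
    have : gs k α • y = 0 := by
      obtain ⟨_, v, rfl⟩ := y
      ext i
      exact (gs_mul _).2 (gasD_mem 0 v i)
    rw [this, map_zero]
  obtain ⟨e1⟩ := gen_ker _ _ φ hφ hb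
  rw [LinearMap.ker_rangeRestrict, ← gas_range_ker hα, LinearEquiv.ker_comp,
    LinearMap.exact_iff.1 hfg] at e1
  have e2 := (LinearEquiv.ofInjective f hf).trans e1
  refine gas_noniso hα (n + 1) (hinf _ (Nat.succ_pos n)) ?_
  push_cast
  exact e2

end gas

end ComplexityTest

/-- **Example (Gasharov–Peeva)**: let `k` be a field, `α ∈ k` nonzero, and
`A = k[X_1, …, X_5]/𝔞` the Gasharov–Peeva algebra. Then `A` is a local Gorenstein
(selfinjective) finite-dimensional `k`-algebra, the doubly infinite complex
`⋯ → A² → A² → ⋯` with differentials `d_n = (x_1, α^n x_3 + x_4; 0, x_2)` is exact,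
and the module `M = Im d_0` has complexity one. Moreover, if `α` has infinite
multiplicative order in `k`, then `M` does not have reducible complexity. -/
theorem gasharov_example (k : Type u) [Field k] (α : k) (hα : α ≠ 0) :
    ∃ _ : IsLocalRing (gasharovRing k α),
      Module.Finite k (gasharovRing k α) ∧
      Module.Injective (gasharovRing k α) (gasharovRing k α) ∧
      (∀ n : ℤ, Function.Exact (gasharovD k α (n + 1)) (gasharovD k α n)) ∧
      complexity (gasharovRing k α) ↥(LinearMap.range (gasharovD k α 0)) = 1 ∧
      ((∀ m : ℕ, 0 < m → α ^ m ≠ 1) →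
        ¬ HasRedCx (gasharovRing k α) ↥(LinearMap.range (gasharovD k α 0))) := by
  exact ⟨gas_local k α, gas_finite k α, gas_injective k α, gas_exact k α hα,
    @gas_cx k _ α (gas_local k α) hα, @gas_main k _ α (gas_local k α) hα⟩
end
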